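/- arXiv:1802.08309 — 6 statements merged into one kernel-verified Lean document; each statement's English description precedes it below -/
import Mathlib

section
/- Let ℬ ⊆ ℕ = {1,2,…} be a primitive set and for N ∈ ℕ let ℬ̃^(N) := {b ∈ ℬ : b has no prime factor ≤ N}. Then ℬ is Behrend if and only if ℬ̃^(N) is Behrend for every N ∈ ℕ. -/
open Filter Set Topology MeasureTheory

open scoped Classical

noncomputable section

/-- The set of multiples `M_B ⊆ ℤ` of a set `B ⊆ ℕ`. -/
def multiplesZ (B : Set ℕ) : Set ℤ := {n : ℤ | ∃ b ∈ B, (b : ℤ) ∣ n}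

/-- The `B`-free integers `F_B = ℤ ∖ M_B`. -/
def freeZ (B : Set ℕ) : Set ℤ := (multiplesZ B)ᶜ

/-- The logarithmically weighted averages `(1/log n) ∑_{k=1}^n 1_A(k)/k`. -/
def logWeight (A : Set ℤ) (n : ℕ) : ℝ :=
  (Real.log n)⁻¹ * ∑ k ∈ Finset.Icc 1 n, A.indicator (fun m : ℤ => ((m : ℝ))⁻¹) (k : ℤ)

/-- The lower logarithmic density of a set `A ⊆ ℤ`. -/
def logDensLow (A : Set ℤ) : ℝ := liminf (logWeight A) atTop

/-- `A ⊆ ℤ` has logarithmic density `d`. -/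
def HasLogDensity (A : Set ℤ) (d : ℝ) : Prop := Tendsto (logWeight A) atTop (𝓝 d)

/-- `B` is primitive: no element divides another one. -/
def Primitive (B : Set ℕ) : Prop := ∀ b ∈ B, ∀ b' ∈ B, b ∣ b' → b = b'

/-- `B` is Behrend: its set of multiples has logarithmic density one. -/
def IsBehrend (B : Set ℕ) : Prop := logDensLow (multiplesZ B) = 1

/-- `B` is taut: removing any element strictly decreases the logarithmic density
of the set of multiples. -/
def IsTaut (B : Set ℕ) : Prop :=
  ∀ b ∈ B, logDensLow (multiplesZ (B \ {b})) < logDensLow (multiplesZ B)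

/-- `B̃^(N)`: the elements of `B` having no prime factor `≤ N`. -/
def Btilde (B : Set ℕ) (N : ℕ) : Set ℕ := {b ∈ B | ∀ p : ℕ, p.Prime → p ∣ b → N < p}

/-- `B^(N)`: the elements of `B` all of whose prime factors are `≤ N`. -/
def Bsmooth (B : Set ℕ) (N : ℕ) : Set ℕ := {b ∈ B | ∀ p : ℕ, p.Prime → p ∣ b → p ≤ N}

/-- Every positive integer is a product of an `N`-smooth and an `N`-rough number. -/
lemma exists_smooth_mul_rough (N k : ℕ) (hk : k ≠ 0) :
    ∃ s m : ℕ, s ∈ (N + 1).smoothNumbers ∧ k = s * m ∧ ∀ p : ℕ, p.Prime → p ∣ m → N < p := by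
  induction k using Nat.strong_induction_on with
  | _ k ih =>
    by_cases h : ∀ p : ℕ, p.Prime → p ∣ k → N < p
    · exact ⟨1, k, by simp [Nat.mem_smoothNumbers], by simp, h⟩
    · push Not at h
      obtain ⟨p, hp, ⟨k', rfl⟩, hpN⟩ := h
      have hk' : k' ≠ 0 := by rintro rfl; simp at hk
      have hlt : k' < p * k' := by
        have := hp.two_le
        have : 0 < k' := Nat.pos_of_ne_zero hk'
        nlinarith
      obtain ⟨s, m, hs, hsm, hm⟩ := ih k' hlt hk'
      refine ⟨p * s, m, Nat.mul_mem_smoothNumbers ?_ hs, by rw [hsm]; ring, hm⟩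
      exact Nat.mem_smoothNumbers_of_lt hp.pos (by omega)

/-- The sum of reciprocals of smooth numbers converges. -/
lemma exists_smooth_bound (N : ℕ) :
    ∃ C : ℝ, ∀ S : Finset ℕ, (∀ s ∈ S, s ∈ (N + 1).smoothNumbers) →
      ∑ s ∈ S, ((s : ℝ))⁻¹ ≤ C := by
  let f : ℕ →* ℝ :=
    { toFun := fun n => ((n : ℝ))⁻¹
      map_one' := by simp
      map_mul' := by intro a b; push_cast; rw [mul_inv] }
  have hf : ∀ {p : ℕ}, p.Prime → ‖f p‖ < 1 := by
    intro p hp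
    have h1 : (1 : ℝ) < p := by exact_mod_cast hp.one_lt
    have : f p = ((p : ℝ))⁻¹ := rfl
    rw [this, Real.norm_of_nonneg (by positivity)]
    exact inv_lt_one_of_one_lt₀ h1
  have hs := (EulerProduct.summable_and_hasSum_smoothNumbers_prod_primesBelow_geometric
    hf (N + 1)).1
  have hs' : Summable ((Nat.smoothNumbers (N + 1)).indicator (fun n => ‖f n‖)) :=
    summable_subtype_iff_indicator.mp hs
  refine ⟨∑' n, (Nat.smoothNumbers (N + 1)).indicator (fun n => ‖f n‖) n, fun S hS => ?_⟩
  refine le_trans (le_of_eq ?_) (hs'.sum_le_tsum S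
    (fun i _ => Set.indicator_nonneg (fun _ _ => norm_nonneg _) _))
  refine Finset.sum_congr rfl fun s hsS => ?_
  rw [Set.indicator_of_mem (hS s hsS)]
  have : f s = ((s : ℝ))⁻¹ := rfl
  rw [this, Real.norm_of_nonneg (by positivity)]

lemma logWeight_nonneg (A : Set ℤ) (n : ℕ) : 0 ≤ logWeight A n := by
  unfold logWeight
  refine mul_nonneg (inv_nonneg.mpr (Real.log_natCast_nonneg n)) (Finset.sum_nonneg fun k _ => ?_)
  by_cases h : (k : ℤ) ∈ A
  · rw [Set.indicator_of_mem h]; push_cast; positivity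
  · rw [Set.indicator_of_notMem h]

lemma tendsto_logWeight_add_compl (A : Set ℤ) :
    Tendsto (fun n => logWeight A n + logWeight Aᶜ n) atTop (𝓝 1) := by
  have hlog : Tendsto (fun n : ℕ => Real.log n) atTop atTop :=
    Real.tendsto_log_atTop.comp tendsto_natCast_atTop_atTop
  have h := (Real.tendsto_harmonic_sub_log.mul hlog.inv_tendsto_atTop).add_const 1
  rw [mul_zero, zero_add] at h
  refine h.congr' ?_
  filter_upwards [hlog.eventually_gt_atTop 0] with n hn
  have hsum : logWeight A n + logWeight Aᶜ n = (Real.log n)⁻¹ * (harmonic n : ℝ) := by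
    unfold logWeight
    rw [← mul_add, ← Finset.sum_add_distrib, harmonic_eq_sum_Icc]
    push_cast
    congr 1
    refine Finset.sum_congr rfl fun k _ => ?_
    by_cases hk : (k : ℤ) ∈ A <;> simp [hk]
  rw [hsum]
  simp only [Pi.inv_apply]
  field_simp
  ring

lemma isBehrend_iff_compl (B : Set ℕ) :
    IsBehrend B ↔ Tendsto (logWeight (multiplesZ B)ᶜ) atTop (𝓝 0) := by
  set A := multiplesZ B with hA
  have hadd := tendsto_logWeight_add_compl A
  have hle : ∀ n, logWeight A n ≤ logWeight A n + logWeight Aᶜ n := fun n =>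
    le_add_of_nonneg_right (logWeight_nonneg _ n)
  have hbelow : IsBoundedUnder (· ≥ ·) atTop (logWeight A) :=
    isBoundedUnder_of ⟨0, fun n => logWeight_nonneg _ n⟩
  have habove : IsBoundedUnder (· ≤ ·) atTop (logWeight A) :=
    hadd.isBoundedUnder_le.mono_le (Eventually.of_forall hle)
  constructor
  · intro h
    have hlim : Tendsto (logWeight A) atTop (𝓝 1) := by
      refine tendsto_of_le_liminf_of_limsup_le (ge_of_eq h) ?_ habove hbelow
      rw [← hadd.limsup_eq]
      exact limsup_le_limsup (Eventually.of_forall hle) hbelow.isCoboundedUnder_le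
        hadd.isBoundedUnder_le
    simpa using hadd.sub hlim
  · intro h
    have hlim : Tendsto (logWeight A) atTop (𝓝 1) := by
      simpa using hadd.sub h
    exact hlim.liminf_eq

lemma exists_logWeight_bound (B : Set ℕ) (N : ℕ) :
    ∃ C : ℝ, ∀ n, logWeight (multiplesZ (Btilde B N))ᶜ n ≤ C * logWeight (multiplesZ B)ᶜ n := by
  obtain ⟨C, hC⟩ := exists_smooth_bound N
  refine ⟨C, fun n => ?_⟩
  have hconv : ∀ D : Set ℕ, ∑ k ∈ Finset.Icc 1 n,
      ((multiplesZ D)ᶜ).indicator (fun m : ℤ => ((m : ℝ))⁻¹) (k : ℤ) =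
      ∑ k ∈ (Finset.Icc 1 n).filter (fun k : ℕ => (k : ℤ) ∈ (multiplesZ D)ᶜ), ((k : ℝ))⁻¹ := by
    intro D
    rw [Finset.sum_filter]
    refine Finset.sum_congr rfl fun k _ => ?_
    by_cases hk : (k : ℤ) ∈ (multiplesZ D)ᶜ
    · rw [Set.indicator_of_mem hk, if_pos hk]; push_cast; rfl
    · rw [Set.indicator_of_notMem hk, if_neg hk]
  unfold logWeight
  rw [hconv, hconv, mul_left_comm]
  refine mul_le_mul_of_nonneg_left ?_ (inv_nonneg.mpr (Real.log_natCast_nonneg n))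
  set K := (Finset.Icc 1 n).filter (fun k : ℕ => (k : ℤ) ∈ (multiplesZ (Btilde B N))ᶜ) with hK
  set M := (Finset.Icc 1 n).filter (fun k : ℕ => (k : ℤ) ∈ (multiplesZ B)ᶜ) with hM
  set S := (Finset.Icc 1 n).filter (fun k : ℕ => k ∈ (N + 1).smoothNumbers) with hS
  have hsub : K ⊆ (S ×ˢ M).image (fun q : ℕ × ℕ => q.1 * q.2) := by
    intro k hk
    rw [hK, Finset.mem_filter, Finset.mem_Icc] at hk
    obtain ⟨⟨hk1, hkn⟩, hkf⟩ := hk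
    obtain ⟨s, m, hs, rfl, hm⟩ := exists_smooth_mul_rough N k (by omega)
    have hs0 : 0 < s := Nat.pos_of_mul_pos_right hk1
    have hm0 : 0 < m := Nat.pos_of_mul_pos_left hk1
    have hsn : s ≤ n := le_trans (Nat.le_mul_of_pos_right s hm0) hkn
    have hmn : m ≤ n := le_trans (Nat.le_mul_of_pos_left m hs0) hkn
    refine Finset.mem_image.mpr ⟨(s, m), Finset.mem_product.mpr ⟨?_, ?_⟩, rfl⟩
    · exact Finset.mem_filter.mpr ⟨Finset.mem_Icc.mpr ⟨hs0, hsn⟩, hs⟩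
    · refine Finset.mem_filter.mpr ⟨Finset.mem_Icc.mpr ⟨hm0, hmn⟩, ?_⟩
      rintro ⟨b, hb, hbm⟩
      have hbm' : b ∣ m := by exact_mod_cast hbm
      refine hkf ⟨b, ⟨hb, fun p hp hpb => hm p hp (hpb.trans hbm')⟩, ?_⟩
      push_cast
      exact Dvd.dvd.mul_left hbm _
  calc ∑ k ∈ K, ((k : ℝ))⁻¹
      ≤ ∑ k ∈ ((S ×ˢ M).image (fun q : ℕ × ℕ => q.1 * q.2) : Finset ℕ), ((k : ℝ))⁻¹ :=
        Finset.sum_le_sum_of_subset_of_nonneg hsub fun _ _ _ => by positivity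
    _ ≤ ∑ q ∈ S ×ˢ M, (((q.1 * q.2 : ℕ) : ℝ))⁻¹ :=
        Finset.sum_image_le_of_nonneg fun _ _ => by positivity
    _ = (∑ s ∈ S, ((s : ℝ))⁻¹) * ∑ m ∈ M, ((m : ℝ))⁻¹ := by
        rw [Finset.sum_mul_sum, Finset.sum_product]
        refine Finset.sum_congr rfl fun s _ => Finset.sum_congr rfl fun m _ => ?_
        push_cast
        rw [mul_inv]
    _ ≤ C * ∑ m ∈ M, ((m : ℝ))⁻¹ := by
        refine mul_le_mul_of_nonneg_right (hC S fun s hs => (Finset.mem_filter.mp hs).2) ?_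
        exact Finset.sum_nonneg fun _ _ => by positivity

/-- A primitive set `B` is Behrend if and only if `B̃^(N)` is Behrend for every `N`. -/
theorem behrend_iff_forall_btilde_behrend (B : Set ℕ) (hB0 : 0 ∉ B) (hprim : Primitive B) :
    IsBehrend B ↔ ∀ N : ℕ, IsBehrend (Btilde B N) := by
  constructor
  · intro h N
    rw [isBehrend_iff_compl] at h ⊢
    obtain ⟨C, hC⟩ := exists_logWeight_bound B N
    refine squeeze_zero (fun n => logWeight_nonneg _ n) hC ?_
    simpa using h.const_mul C
  · intro h
    have h0 : Btilde B 0 = B := by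
      ext b
      exact ⟨fun hb => hb.1, fun hb => ⟨hb, fun p hp _ => hp.pos⟩⟩
    rw [← h0]
    exact h 0
end
end

section
/- Let ℬ ⊆ ℕ = {1,2,…} be a primitive set and for N ∈ ℕ let ℬ̃^(N) := {b ∈ ℬ : b has no prime factor ≤ N}. Then ℬ is not Behrend if and only if lim_{N→∞} δ(M_{ℬ̃^(N)}) = 0. -/
open Filter Set Topology MeasureTheory

open scoped Classical

noncomputable section

/-- the power weight -/
def powAF (s : ℝ) : ArithmeticFunction ℝ := ⟨fun n => if n = 0 then 0 else 1 / (n : ℝ) ^ s, by simp⟩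

theorem powAF_mult (s : ℝ) : (powAF s).IsMultiplicative := by
  rw [ArithmeticFunction.IsMultiplicative.iff_ne_zero]
  refine ⟨by simp [powAF], ?_⟩
  intro m n hm hn _
  simp only [powAF, ArithmeticFunction.coe_mk, hm, hn, mul_eq_zero, or_self, if_false]
  push_cast
  rw [Real.mul_rpow (by positivity) (by positivity)]
  field_simp

/-- the nonnegative convolution factor -/
def hAF (t : ℝ) : ArithmeticFunction ℝ :=
  ArithmeticFunction.prodPrimeFactors (fun p => 1 - 1 / (p : ℝ) ^ t)

theorem hAF_nonneg (t : ℝ) (ht : 0 < t) (n : ℕ) : 0 ≤ hAF t n := by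
  rcases eq_or_ne n 0 with rfl | hn
  · simp
  rw [hAF, ArithmeticFunction.prodPrimeFactors_apply hn]
  refine Finset.prod_nonneg fun p hp => ?_
  have hp1 : (1 : ℝ) ≤ p := by exact_mod_cast (Nat.prime_of_mem_primeFactors hp).one_lt.le
  have : 1 ≤ (p : ℝ) ^ t := Real.one_le_rpow hp1 ht.le
  have : 1 / (p : ℝ) ^ t ≤ 1 := by
    rw [div_le_one (by positivity)]; exact this
  linarith

theorem hAF_mul (t : ℝ) : hAF t * powAF t = (ArithmeticFunction.zeta : ArithmeticFunction ℝ) := by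
  rw [ArithmeticFunction.IsMultiplicative.eq_iff_eq_on_prime_powers (hAF t * powAF t)
    ((ArithmeticFunction.IsMultiplicative.prodPrimeFactors _).mul (powAF_mult t)) _
    ArithmeticFunction.isMultiplicative_zeta.natCast]
  intro p k hp
  rw [ArithmeticFunction.mul_apply]
  rw [Nat.sum_divisorsAntidiagonal' (f := fun a b => hAF t a * powAF t b)]
  rw [Nat.sum_divisors_prime_pow hp]
  have hp0 : p ≠ 0 := hp.ne_zero
  have hpp : (0 : ℝ) < p := by exact_mod_cast hp.pos
  set x : ℝ := 1 / (p : ℝ) ^ t with hx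
  have h1 : ∀ i, powAF t (p ^ i) = x ^ i := by
    intro i
    simp only [powAF, ArithmeticFunction.coe_mk, pow_eq_zero_iff', hp0, false_and, if_false, hx]
    push_cast
    rw [div_pow, one_pow, ← Real.rpow_natCast, ← Real.rpow_natCast, ← Real.rpow_mul hpp.le,
      ← Real.rpow_mul hpp.le, mul_comm]
  have h2 : ∀ i, i ≠ 0 → hAF t (p ^ i) = 1 - x := by
    intro i hi
    rw [hAF, ArithmeticFunction.prodPrimeFactors_apply (pow_ne_zero _ hp0),
      Nat.primeFactors_prime_pow hi hp]
    simp [hx]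
  have h3 : hAF t 1 = 1 := by
    rw [hAF, ArithmeticFunction.prodPrimeFactors_apply one_ne_zero]; simp
  rw [Finset.sum_range_succ]
  have h4 : ∑ i ∈ Finset.range k, hAF t (p ^ k / p ^ i) * powAF t (p ^ i)
      = ∑ i ∈ Finset.range k, (1 - x) * x ^ i := by
    refine Finset.sum_congr rfl fun i hi => ?_
    have hi := Finset.mem_range.mp hi
    rw [Nat.pow_div hi.le hp.pos, h2 _ (by omega), h1]
  rw [h4, ← Finset.mul_sum, Nat.div_self (pow_pos hp.pos _), h3, h1, mul_neg_geom_sum]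
  simp [hp0]

/-- The weighted sum over a set. -/
def S (T : Set ℕ) (s : ℝ) : ℝ := ∑' n : ℕ, T.indicator (fun n : ℕ => 1 / (n : ℝ) ^ s) n

/-- The zeta sum. -/
def Z (s : ℝ) : ℝ := ∑' n : ℕ, 1 / (n : ℝ) ^ s

/-- harmonic sum over a set -/
def H (T : Set ℕ) (n : ℕ) : ℝ := ∑ k ∈ Finset.Icc 1 n, T.indicator (fun m : ℕ => ((m : ℝ))⁻¹) k

/-- trace of an integer set on the naturals -/
def tr (A : Set ℤ) : Set ℕ := {n | (n : ℤ) ∈ A}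

theorem logWeight_eq (A : Set ℤ) (n : ℕ) : logWeight A n = (Real.log n)⁻¹ * H (tr A) n := by
  unfold logWeight H
  refine congrArg (fun z => (Real.log n)⁻¹ * z) (Finset.sum_congr rfl fun k _ => ?_)
  by_cases h : (k : ℤ) ∈ A
  · rw [indicator_of_mem h, indicator_of_mem (show k ∈ tr A from h)]; simp
  · rw [indicator_of_notMem h, indicator_of_notMem (show k ∉ tr A from h)]

theorem sm (s : ℝ) (hs : 1 < s) : Summable (fun n : ℕ => 1 / (n : ℝ) ^ s) :=
  Real.summable_one_div_nat_rpow.mpr hs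

theorem smT (T : Set ℕ) (s : ℝ) (hs : 1 < s) :
    Summable (T.indicator (fun n : ℕ => 1 / (n : ℝ) ^ s)) := (sm s hs).indicator T

theorem w_nonneg (s : ℝ) (n : ℕ) : 0 ≤ 1 / (n : ℝ) ^ s := by positivity

theorem Z_pos (s : ℝ) (hs : 1 < s) : 0 < Z s :=
  (sm s hs).tsum_pos (w_nonneg s) 1 (by simp)

theorem S_nonneg (T : Set ℕ) (s : ℝ) : 0 ≤ S T s :=
  tsum_nonneg fun n => indicator_nonneg (fun n _ => w_nonneg s n) n

theorem S_mono {T T' : Set ℕ} (h : T ⊆ T') (s : ℝ) (hs : 1 < s) : S T s ≤ S T' s :=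
  (smT T s hs).tsum_le_tsum
    (fun n => indicator_le_indicator_of_subset h (fun n => w_nonneg s n) n) (smT T' s hs)

theorem S_compl (T : Set ℕ) (s : ℝ) (hs : 1 < s) : S T s + S Tᶜ s = Z s := by
  unfold S Z
  rw [← (smT T s hs).tsum_add (smT Tᶜ s hs)]
  refine tsum_congr fun n => ?_
  exact indicator_self_add_compl_apply T _ n

theorem H_univ (n : ℕ) : H univ n = (harmonic n : ℝ) := by
  simp [H, harmonic_eq_sum_Icc]

theorem H_nonneg (T : Set ℕ) (n : ℕ) : 0 ≤ H T n :=
  Finset.sum_nonneg fun k _ => indicator_nonneg (fun n _ => by positivity) k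

theorem H_mono {T T' : Set ℕ} (h : T ⊆ T') (n : ℕ) : H T n ≤ H T' n :=
  Finset.sum_le_sum fun k _ => indicator_le_indicator_of_subset h (fun n => by positivity) k

theorem H_compl (T : Set ℕ) (n : ℕ) : H T n + H Tᶜ n = (harmonic n : ℝ) := by
  rw [← H_univ]
  unfold H
  rw [← Finset.sum_add_distrib]
  refine Finset.sum_congr rfl fun k _ => ?_
  rw [indicator_self_add_compl_apply, indicator_univ]

/-- closed under multiples -/
def MulClosed (T : Set ℕ) : Prop := ∀ m ∈ T, ∀ d : ℕ, d * m ∈ T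

theorem conv_pt (s : ℝ) (n : ℕ) (hn : n ≠ 0) :
    ((hAF (s-1)).pmul (powAF 1) * powAF s) n = (n : ℝ)⁻¹ := by
  have h := congrArg (fun f : ArithmeticFunction ℝ => f n) (hAF_mul (s-1))
  simp only [ArithmeticFunction.mul_apply, ArithmeticFunction.natCoe_apply,
    ArithmeticFunction.zeta_apply, hn, if_false, Nat.cast_one] at h
  rw [ArithmeticFunction.mul_apply]
  calc _ = ∑ x ∈ n.divisorsAntidiagonal, (hAF (s-1) x.1 * powAF (s-1) x.2) * (n : ℝ)⁻¹ := by
        refine Finset.sum_congr rfl fun x hx => ?_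
        have hx := Nat.mem_divisorsAntidiagonal.mp hx
        have h1 : x.1 ≠ 0 := by rintro h; simp [h] at hx; omega
        have h2 : x.2 ≠ 0 := by rintro h; simp [h] at hx; omega
        have h1' : (0 : ℝ) < x.1 := by positivity
        have h2' : (0 : ℝ) < x.2 := by positivity
        rw [ArithmeticFunction.pmul_apply]
        simp only [powAF, ArithmeticFunction.coe_mk, h1, h2, if_false]
        rw [Real.rpow_sub_one h2'.ne', ← hx.1, Real.rpow_one]
        push_cast
        field_simp
    _ = _ := by rw [← Finset.sum_mul, h, one_mul]

theorem powAF_nonneg (s : ℝ) (n : ℕ) : 0 ≤ powAF s n := by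
  simp only [powAF, ArithmeticFunction.coe_mk]; split_ifs <;> positivity

theorem powAF_eq (s : ℝ) (n : ℕ) (hn : n ≠ 0) : powAF s n = 1 / (n : ℝ) ^ s := by
  simp [powAF, hn]

/-- restriction of the power weight -/
def eAF (T : Set ℕ) (s : ℝ) : ArithmeticFunction ℝ :=
  ⟨fun n => T.indicator (fun n => powAF s n) n, by by_cases h : 0 ∈ T <;> simp [h]⟩

theorem eAF_apply (T : Set ℕ) (s : ℝ) (n : ℕ) : eAF T s n = T.indicator (fun n => powAF s n) n := rfl

theorem eAF_nonneg (T : Set ℕ) (s : ℝ) (n : ℕ) : 0 ≤ eAF T s n :=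
  indicator_nonneg (fun n _ => powAF_nonneg s n) n

theorem eAF_eq (T : Set ℕ) (s : ℝ) (n : ℕ) (hn : n ≠ 0) :
    eAF T s n = T.indicator (fun n : ℕ => 1 / (n : ℝ) ^ s) n := by
  rw [eAF_apply]
  by_cases h : n ∈ T <;> simp [h, powAF_eq s n hn]

/-- convolution factor with reciprocal weight -/
def gAF (s : ℝ) : ArithmeticFunction ℝ := (hAF (s-1)).pmul (powAF 1)

theorem gAF_nonneg (s : ℝ) (hs : 1 < s) (n : ℕ) : 0 ≤ gAF s n := by
  rw [gAF, ArithmeticFunction.pmul_apply]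
  exact mul_nonneg (hAF_nonneg _ (by linarith) n) (powAF_nonneg _ n)

theorem conv_T (T : Set ℕ) (hT : MulClosed T) (s : ℝ) (hs : 1 < s) (n : ℕ) (hn : n ≠ 0) :
    (gAF s * eAF T s) n ≤ T.indicator (fun m : ℕ => ((m : ℝ))⁻¹) n := by
  by_cases h : n ∈ T
  · rw [indicator_of_mem h, ← conv_pt s n hn, ArithmeticFunction.mul_apply,
      ArithmeticFunction.mul_apply]
    refine Finset.sum_le_sum fun x _ => ?_
    refine mul_le_mul_of_nonneg_left ?_ (gAF_nonneg s hs _)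
    rw [eAF_apply]
    exact indicator_le_self' (fun _ _ => powAF_nonneg s _) _
  · rw [indicator_of_notMem h, ArithmeticFunction.mul_apply]
    refine le_of_eq (Finset.sum_eq_zero fun x hx => ?_)
    have hx := Nat.mem_divisorsAntidiagonal.mp hx
    have : x.2 ∉ T := fun h' => h (hx.1 ▸ hT _ h' _)
    rw [eAF_apply, indicator_of_notMem this, mul_zero]

theorem Icc_eq (n : ℕ) : Finset.Icc 1 n = Finset.Ioc 0 n := by
  ext; simp [Nat.lt_iff_add_one_le]

/-- finite partial sum -/
def SP (T : Set ℕ) (s : ℝ) (K : ℕ) : ℝ :=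
  ∑ m ∈ Finset.Ioc 0 K, T.indicator (fun n : ℕ => 1 / (n : ℝ) ^ s) m

theorem SP_nonneg (T : Set ℕ) (s : ℝ) (K : ℕ) : 0 ≤ SP T s K :=
  Finset.sum_nonneg fun n _ => indicator_nonneg (fun n _ => w_nonneg s n) n

theorem SP_eq (T : Set ℕ) (s : ℝ) (K : ℕ) : SP T s K = ∑ m ∈ Finset.Ioc 0 K, eAF T s m :=
  Finset.sum_congr rfl fun m hm => (eAF_eq T s m (by have := (Finset.mem_Ioc.mp hm).1; omega)).symm

theorem SP_le (T : Set ℕ) (s : ℝ) (hs : 1 < s) (K : ℕ) : SP T s K ≤ S T s :=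
  (smT T s hs).sum_le_tsum _ fun n _ => indicator_nonneg (fun n _ => w_nonneg s n) n

theorem SP_tendsto (T : Set ℕ) (s : ℝ) (hs : 1 < s) :
    Tendsto (SP T s) atTop (𝓝 (S T s)) := by
  have h := ((smT T s hs).hasSum.tendsto_sum_nat).comp (tendsto_add_atTop_nat 1)
  refine h.congr fun K => ?_
  have h0 : T.indicator (fun n : ℕ => 1 / (n : ℝ) ^ s) 0 = 0 := by
    by_cases h : 0 ∈ T
    · rw [indicator_of_mem h]; simp [Real.zero_rpow (by linarith : s ≠ 0)]
    · rw [indicator_of_notMem h]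
  simp only [Function.comp, SP]
  rw [← Finset.sum_subset (s₁ := Finset.Ioc 0 K) (s₂ := Finset.range (K+1))]
  · intro x hx; simp at hx ⊢; omega
  · intro x hx hx'
    have : x = 0 := by simp at hx hx'; omega
    rw [this, h0]

theorem gsum_lower (s : ℝ) (hs : 1 < s) (y : ℕ) :
    (harmonic y : ℝ) ≤ (∑ d ∈ Finset.Ioc 0 y, gAF s d) * Z s := by
  have h1 : (harmonic y : ℝ) = ∑ n ∈ Finset.Ioc 0 y, (gAF s * powAF s) n := by
    rw [← H_univ, H, Icc_eq]
    refine Finset.sum_congr rfl fun n hn => ?_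
    rw [indicator_univ]
    exact (conv_pt s n (by have := (Finset.mem_Ioc.mp hn).1; omega)).symm
  rw [h1, ArithmeticFunction.sum_Ioc_mul_eq_sum_sum, Finset.sum_mul]
  refine Finset.sum_le_sum fun d _ => mul_le_mul_of_nonneg_left ?_ (gAF_nonneg s hs d)
  calc _ = ∑ m ∈ Finset.Ioc 0 (y / d), 1 / (m : ℝ) ^ s :=
        Finset.sum_congr rfl fun m hm => powAF_eq s m (by have := (Finset.mem_Ioc.mp hm).1; omega)
    _ ≤ Z s := (sm s hs).sum_le_tsum _ fun n _ => w_nonneg s n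

theorem H_lower (T : Set ℕ) (hT : MulClosed T) (s : ℝ) (hs : 1 < s) (K y x : ℕ)
    (hxy : y * K ≤ x) : (harmonic y : ℝ) * (SP T s K / Z s) ≤ H T x := by
  have hZ := Z_pos s hs
  have h1 : (∑ d ∈ Finset.Ioc 0 y, gAF s d) * SP T s K ≤ H T x := by
    calc _ ≤ ∑ n ∈ Finset.Ioc 0 x, (gAF s * eAF T s) n := by
          rcases Nat.eq_zero_or_pos K with rfl | hK
          · simp only [SP, Finset.Ioc_self, Finset.sum_empty, mul_zero]
            refine Finset.sum_nonneg fun n _ => ?_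
            rw [ArithmeticFunction.mul_apply]
            exact Finset.sum_nonneg fun x _ => mul_nonneg (gAF_nonneg s hs _) (eAF_nonneg T s _)
          rw [ArithmeticFunction.sum_Ioc_mul_eq_sum_sum, Finset.sum_mul]
          have hyx : y ≤ x := le_trans (Nat.le_mul_of_pos_right y hK) hxy
          refine le_trans ?_ (Finset.sum_le_sum_of_subset_of_nonneg
            (Finset.Ioc_subset_Ioc_right hyx) fun d _ _ => mul_nonneg (gAF_nonneg s hs d)
              (Finset.sum_nonneg fun m _ => eAF_nonneg T s m))
          refine Finset.sum_le_sum fun d hd => mul_le_mul_of_nonneg_left ?_ (gAF_nonneg s hs d)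
          rw [SP_eq]
          refine Finset.sum_le_sum_of_subset_of_nonneg (Finset.Ioc_subset_Ioc_right ?_)
            fun m _ _ => eAF_nonneg T s m
          have hd := Finset.mem_Ioc.mp hd
          rw [Nat.le_div_iff_mul_le hd.1]
          calc K * d ≤ K * y := Nat.mul_le_mul_left _ hd.2
            _ ≤ x := by rw [mul_comm]; exact hxy
      _ ≤ H T x := by
          rw [H, Icc_eq]
          exact Finset.sum_le_sum fun n hn =>
            conv_T T hT s hs n (by have := (Finset.mem_Ioc.mp hn).1; omega)
  refine le_trans ?_ h1
  rw [mul_div_assoc', div_le_iff₀ hZ]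
  have := mul_le_mul_of_nonneg_right (gsum_lower s hs y) (SP_nonneg T s K)
  linarith

theorem logDens_bdd (A : Set ℤ) : ∀ᶠ n in atTop, 0 ≤ logWeight A n ∧ logWeight A n ≤ 2 := by
  filter_upwards [eventually_ge_atTop 3] with n hn
  have hl : 1 ≤ Real.log n := by
    rw [Real.le_log_iff_exp_le (by positivity)]
    have : (3 : ℝ) ≤ n := by exact_mod_cast hn
    linarith [Real.exp_one_lt_d9]
  rw [logWeight_eq]
  refine ⟨mul_nonneg (by positivity) (H_nonneg _ _), ?_⟩
  rw [inv_mul_le_iff₀ (by linarith)]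
  have := H_mono (subset_univ (tr A)) n
  rw [H_univ] at this
  linarith [harmonic_le_one_add_log n]

theorem le_logDensLow (A : Set ℤ) (c : ℝ) (h : ∀ᶠ n in atTop, c ≤ logWeight A n) :
    c ≤ logDensLow A :=
  le_liminf_of_le (isCoboundedUnder_ge_of_eventually_le _ ((logDens_bdd A).mono fun _ h => h.2)) h

theorem ev_of_lt (A : Set ℤ) (c : ℝ) (h : c < logDensLow A) : ∀ᶠ n in atTop, c ≤ logWeight A n := by
  have := eventually_lt_of_lt_liminf h
    (isBoundedUnder_of_eventually_ge ((logDens_bdd A).mono fun _ h => h.1))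
  exact this.mono fun _ h => h.le

theorem logDensLow_ge (A : Set ℤ) (hT : MulClosed (tr A)) (s : ℝ) (hs : 1 < s) :
    S (tr A) s / Z s ≤ logDensLow A := by
  have hK : ∀ K : ℕ, SP (tr A) s K / Z s ≤ logDensLow A := by
    intro K
    rcases Nat.eq_zero_or_pos K with rfl | hK
    · simp only [SP, Finset.Ioc_self, Finset.sum_empty, zero_div]
      exact le_logDensLow A 0 ((logDens_bdd A).mono fun _ h => h.1)
    set q := SP (tr A) s K / Z s
    have hq : 0 ≤ q := div_nonneg (SP_nonneg _ _ _) (Z_pos s hs).le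
    refine le_of_forall_lt fun c hc => ?_
    have hlim : Tendsto (fun n : ℕ => (1 - Real.log K * (Real.log n)⁻¹) * q) atTop (𝓝 q) := by
      have h1 : Tendsto (fun n : ℕ => (Real.log n)⁻¹) atTop (𝓝 0) :=
        (Real.tendsto_log_atTop.comp tendsto_natCast_atTop_atTop).inv_tendsto_atTop
      have := ((h1.const_mul (Real.log K)).const_sub 1).mul_const q
      simpa using this
    obtain ⟨c', hcc', hc'⟩ := exists_between hc
    refine lt_of_lt_of_le hcc' (le_logDensLow A c' ?_)
    filter_upwards [hlim.eventually (lt_mem_nhds hc'), eventually_ge_atTop 2] with n h1 hn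
    refine h1.le.trans ?_
    have hl : 0 < Real.log n := Real.log_pos (by exact_mod_cast hn)
    have hb := H_lower (tr A) hT s hs K (n / K) n (Nat.div_mul_le_self n K)
    have hh : Real.log n - Real.log K ≤ (harmonic (n / K) : ℝ) := by
      refine le_trans ?_ (log_add_one_le_harmonic (n / K))
      have hKr : (0 : ℝ) < K := by exact_mod_cast hK
      rw [← Real.log_div (by positivity) hKr.ne']
      refine Real.log_le_log (by positivity) ?_
      rw [div_le_iff₀ hKr]
      have := Nat.lt_div_mul_add hK (a := n)
      have h3 : n ≤ (n / K + 1) * K := by rw [add_mul]; omega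
      exact_mod_cast h3
    rw [logWeight_eq, le_inv_mul_iff₀ hl]
    calc _ = (Real.log n - Real.log K) * q := by field_simp
      _ ≤ _ := mul_le_mul_of_nonneg_right hh hq
      _ ≤ _ := hb
  exact le_of_tendsto' ((SP_tendsto (tr A) s hs).div_const (Z s)) hK

theorem abel_aux (b v : ℕ → ℝ) (C : ℝ) (hv : ∀ n, 1 ≤ n → v (n+1) ≤ v n)
    (hB : ∀ k, -C ≤ ∑ n ∈ Finset.Ioc 0 k, b n) (K : ℕ) :
    v (K+1) * (∑ n ∈ Finset.Ioc 0 K, b n + C) - C * v 1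
      ≤ ∑ n ∈ Finset.Ioc 0 K, b n * v n := by
  induction K with
  | zero => simp; linarith
  | succ K ih =>
    rw [← Finset.insert_Ioc_right_eq_Ioc_add_one (Nat.zero_le K), Finset.sum_insert (by simp),
      Finset.sum_insert (by simp)]
    have h1 := hB (K+1)
    rw [← Finset.insert_Ioc_right_eq_Ioc_add_one (Nat.zero_le K), Finset.sum_insert (by simp)] at h1
    have h2 := hv (K+1) (by omega)
    nlinarith [mul_nonneg (sub_nonneg.mpr h2) (by linarith : 0 ≤ b (K+1) + ∑ n ∈ Finset.Ioc 0 K, b n + C)]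

theorem abel (T : Set ℕ) (c : ℝ) (C : ℝ) (hB : ∀ k, c * (harmonic k : ℝ) - C ≤ H T k)
    (s : ℝ) (hs : 1 < s) : c * Z s - C ≤ S T s := by
  have hK : ∀ K, c * SP univ s K - C ≤ SP T s K := by
    intro K
    have h := abel_aux (fun n => T.indicator (fun m : ℕ => ((m : ℝ))⁻¹) n - c * (n : ℝ)⁻¹)
      (fun n => 1 / (n : ℝ) ^ (s-1)) C ?_ ?_ K
    · have hB' := hB K
      have e : ∀ k, ∑ n ∈ Finset.Ioc 0 k, (T.indicator (fun m : ℕ => ((m : ℝ))⁻¹) n - c * (n : ℝ)⁻¹)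
          = H T k - c * (harmonic k : ℝ) := by
        intro k
        rw [Finset.sum_sub_distrib, ← Finset.mul_sum, ← H_univ]
        simp [H, Icc_eq]
      have e2 : ∑ n ∈ Finset.Ioc 0 K, (T.indicator (fun m : ℕ => ((m : ℝ))⁻¹) n - c * (n : ℝ)⁻¹) *
          (1 / (n : ℝ) ^ (s-1)) = SP T s K - c * SP univ s K := by
        rw [SP, SP, Finset.mul_sum, ← Finset.sum_sub_distrib]
        refine Finset.sum_congr rfl fun n hn => ?_
        have hn : (0 : ℝ) < n := by exact_mod_cast (Finset.mem_Ioc.mp hn).1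
        rw [Real.rpow_sub_one hn.ne', indicator_univ]
        by_cases h : n ∈ T
        · rw [indicator_of_mem h, indicator_of_mem h]; field_simp
        · rw [indicator_of_notMem h, indicator_of_notMem h]; field_simp; ring
      rw [e2, e] at h
      have h3 : 0 ≤ 1 / ((K+1 : ℕ) : ℝ) ^ (s-1) := by positivity
      have h4 := mul_nonneg h3 (by linarith : 0 ≤ H T K - c * (harmonic K : ℝ) + C)
      simp only [Nat.cast_one, Real.one_rpow] at h
      linarith
    · intro n hn
      have : (0 : ℝ) < n := by exact_mod_cast hn
      refine one_div_le_one_div_of_le (by positivity) ?_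
      exact Real.rpow_le_rpow this.le (by push_cast; linarith) (by linarith)
    · intro k
      rw [Finset.sum_sub_distrib, ← Finset.mul_sum]
      have := hB k
      rw [← H_univ] at this
      simp only [H, Icc_eq, indicator_univ] at this
      linarith
  have hu : S univ s = Z s := by simp [S, Z]
  have h1 := ((SP_tendsto univ s hs).const_mul c).sub_const C
  rw [hu] at h1
  exact le_of_tendsto_of_tendsto' h1 (SP_tendsto T s hs) hK

theorem Z_inv_tendsto : Tendsto (fun s => (Z s)⁻¹) (𝓝[>] (1:ℝ)) (𝓝 0) := by
  have h := tendsto_sub_mul_tsum_nat_rpow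
  have h1 : Tendsto (fun s : ℝ => (s - 1)) (𝓝[>] (1:ℝ)) (𝓝 0) := by
    have : Tendsto (fun s : ℝ => s - 1) (𝓝 1) (𝓝 (1 - 1)) := tendsto_id.sub_const 1
    rw [sub_self] at this
    exact this.mono_left nhdsWithin_le_nhds
  have h2 := h1.div h one_ne_zero
  rw [zero_div] at h2
  refine h2.congr' ?_
  filter_upwards [self_mem_nhdsWithin] with s hs
  have hs : 1 < s := hs
  have := Z_pos s hs
  have h3 : s - 1 ≠ 0 := by linarith
  simp only [Pi.div_apply]
  change (s-1) / ((s-1) * Z s) = _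
  field_simp

theorem P_tendsto (A : Set ℤ) (hT : MulClosed (tr A)) :
    Tendsto (fun s => S (tr A) s / Z s) (𝓝[>] (1:ℝ)) (𝓝 (logDensLow A)) := by
  rw [tendsto_order]
  constructor
  · intro a ha
    obtain ⟨c, hac, hc⟩ := exists_between ha
    have hev := ev_of_lt A c hc
    obtain ⟨n0, hn0⟩ := eventually_atTop.mp hev
    have hB : ∃ C, ∀ k, c * (harmonic k : ℝ) - C ≤ H (tr A) k := by
      refine ⟨|c| * (1 + Real.log (n0 + 2)), fun k => ?_⟩
      have hl0 : 0 ≤ Real.log (n0 + 2) := Real.log_nonneg (by linarith [(Nat.cast_nonneg n0 : (0:ℝ) ≤ n0)])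
      have hh := harmonic_le_one_add_log k
      have hk0 : (0:ℝ) ≤ harmonic k := by rw [← H_univ]; exact H_nonneg _ _
      by_cases hk : k ≤ n0 + 1
      · have hlk : Real.log k ≤ Real.log (n0 + 2) := by
          rcases Nat.eq_zero_or_pos k with rfl | hk0
          · simpa using hl0
          · refine Real.log_le_log (by exact_mod_cast hk0) ?_
            have : (k : ℝ) ≤ (n0 + 1 : ℕ) := by exact_mod_cast hk
            push_cast at this; linarith
        have := H_nonneg (tr A) k
        have h5 : c * (harmonic k : ℝ) ≤ |c| * (1 + Real.log (n0 + 2)) :=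
          mul_le_mul (le_abs_self c) (by linarith) hk0 (abs_nonneg c)
        linarith
      · have h2 := hn0 k (by omega)
        have hlk : 0 < Real.log k := Real.log_pos (by exact_mod_cast (by omega : 1 < k))
        rw [logWeight_eq, le_inv_mul_iff₀ hlk] at h2
        have hlo : Real.log k ≤ (harmonic k : ℝ) := by
          refine le_trans (Real.log_le_log (by exact_mod_cast (by omega : 0 < k)) ?_) (log_add_one_le_harmonic k)
          push_cast; linarith
        have h6 : c * ((harmonic k : ℝ) - Real.log k) ≤ |c| * 1 :=
          mul_le_mul (le_abs_self c) (by linarith) (by linarith) (abs_nonneg c)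
        nlinarith [mul_nonneg (abs_nonneg c) hl0]
    obtain ⟨C, hC⟩ := hB
    have hlim : Tendsto (fun s => c - C * (Z s)⁻¹) (𝓝[>] (1:ℝ)) (𝓝 c) := by
      have := (Z_inv_tendsto.const_mul C).const_sub c
      simpa using this
    filter_upwards [hlim.eventually (lt_mem_nhds hac), self_mem_nhdsWithin] with s h1 hs
    have hZ := Z_pos s hs
    refine lt_of_lt_of_le h1 ?_
    rw [le_div_iff₀ hZ]
    have := abel (tr A) c C hC s hs
    have e : (c - C * (Z s)⁻¹) * Z s = c * Z s - C := by field_simp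
    linarith
  · intro a ha
    filter_upwards [self_mem_nhdsWithin] with s hs
    exact lt_of_le_of_lt (logDensLow_ge A hT s hs) ha

theorem mem_tr (B : Set ℕ) (n : ℕ) : n ∈ tr (multiplesZ B) ↔ ∃ b ∈ B, b ∣ n := by
  simp [tr, multiplesZ, Int.natCast_dvd_natCast]

theorem mulClosed_tr (B : Set ℕ) : MulClosed (tr (multiplesZ B)) := by
  intro m hm d
  rw [mem_tr] at *
  obtain ⟨b, hb, h⟩ := hm
  exact ⟨b, hb, h.mul_left d⟩

theorem tr_mono {B B' : Set ℕ} (h : B ⊆ B') : tr (multiplesZ B) ⊆ tr (multiplesZ B') := by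
  intro n hn
  rw [mem_tr] at *
  obtain ⟨b, hb, hd⟩ := hn
  exact ⟨b, h hb, hd⟩

/-- the free set -/
def E (B : Set ℕ) : Set ℕ := (tr (multiplesZ B))ᶜ

theorem mem_E (B : Set ℕ) (n : ℕ) : n ∈ E B ↔ ∀ b ∈ B, ¬ b ∣ n := by
  rw [E, mem_compl_iff, mem_tr]; push Not; rfl

theorem H_dvd (T : Set ℕ) (hT : ∀ d m, d * m ∈ T → m ∈ T) (p : ℕ) (hp : 2 ≤ p) (x : ℕ) :
    H (T ∩ {k | p ∣ k}) x ≤ (1 / 2) * H T x := by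
  have e : ∀ U : Set ℕ, H U x = ∑ k ∈ (Finset.Icc 1 x).filter (· ∈ U), (k : ℝ)⁻¹ := by
    intro U
    rw [H, Finset.sum_filter]
    exact Finset.sum_congr rfl fun k _ => by simp [indicator_apply]
  rw [e, e]
  set f := (Finset.Icc 1 x).filter (· ∈ T ∩ {k | p ∣ k}) with hf
  have hmem : ∀ k ∈ f, 1 ≤ k ∧ k ≤ x ∧ k ∈ T ∧ p ∣ k := by
    intro k hk; rw [hf] at hk; simp at hk; tauto
  have hinj : Set.InjOn (fun k => k / p) (f : Set ℕ) := by
    intro a ha b hb hab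
    obtain ⟨_, _, _, a', rfl⟩ := hmem a ha
    obtain ⟨_, _, _, b', rfl⟩ := hmem b hb
    simp only [Nat.mul_div_cancel_left _ (by omega : 0 < p)] at hab
    rw [hab]
  have key : ∑ k ∈ f, (k : ℝ)⁻¹ ≤
      (1 / 2) * ∑ k ∈ (Finset.Icc 1 x).filter (· ∈ T), (k : ℝ)⁻¹ := by
    calc ∑ k ∈ f, (k : ℝ)⁻¹ ≤ ∑ k ∈ f, (1/2) * ((k / p : ℕ) : ℝ)⁻¹ := by
          refine Finset.sum_le_sum fun k hk => ?_
          obtain ⟨h1, _, _, m, rfl⟩ := hmem k hk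
          have hm : 0 < m := Nat.pos_of_ne_zero (by rintro rfl; simp at h1)
          rw [Nat.mul_div_cancel_left _ (by omega : 0 < p)]
          push_cast
          rw [mul_inv]
          refine mul_le_mul_of_nonneg_right ?_ (by positivity)
          rw [one_div]
          exact inv_anti₀ (by norm_num) (by exact_mod_cast hp)
      _ = ∑ m ∈ f.image (fun k => k / p), (1/2) * ((m : ℕ) : ℝ)⁻¹ := by
          rw [Finset.sum_image hinj]
      _ ≤ ∑ m ∈ (Finset.Icc 1 x).filter (· ∈ T), (1/2) * ((m : ℕ) : ℝ)⁻¹ := by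
          refine Finset.sum_le_sum_of_subset_of_nonneg ?_ fun _ _ _ => by positivity
          intro m hm
          obtain ⟨k, hk, rfl⟩ := Finset.mem_image.mp hm
          obtain ⟨h1, h2, h3, m, rfl⟩ := hmem k hk
          have hm : 0 < m := Nat.pos_of_ne_zero (by rintro rfl; simp at h1)
          simp only [Nat.mul_div_cancel_left _ (by omega : 0 < p), Finset.mem_filter, Finset.mem_Icc]
          exact ⟨⟨hm, le_trans (Nat.le_mul_of_pos_left m (by omega)) h2⟩, hT _ _ h3⟩
      _ = _ := by rw [Finset.mul_sum]
  convert key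

theorem H_union (U V : Set ℕ) (x : ℕ) : H U x ≤ H (U ∩ V) x + H (U \ V) x := by
  unfold H
  rw [← Finset.sum_add_distrib]
  refine Finset.sum_le_sum fun k _ => ?_
  by_cases h1 : k ∈ U <;> by_cases h2 : k ∈ V <;> simp [h1, h2]

theorem E_step (B : Set ℕ) (N x : ℕ) : H (E (Btilde B (N+1))) x ≤ 2 * H (E (Btilde B N)) x := by
  by_cases hp : (N+1).Prime
  · have h1 := H_union (E (Btilde B (N+1))) {k | (N+1) ∣ k} x
    have h2 := H_dvd (E (Btilde B (N+1))) (by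
      intro d m h
      rw [mem_E] at *
      exact fun b hb hd => h b hb (hd.mul_left d)) (N+1) hp.two_le x
    have h3 : H (E (Btilde B (N+1)) \ {k | (N+1) ∣ k}) x ≤ H (E (Btilde B N)) x := by
      refine H_mono ?_ x
      rintro k ⟨hk, hk'⟩
      rw [mem_E] at *
      intro b hb hbk
      refine hk b ⟨hb.1, fun q hq hqb => ?_⟩ hbk
      have := hb.2 q hq hqb
      rcases Nat.lt_or_ge (N+1) q with h | h
      · exact h
      · have : q = N + 1 := by omega
        exact absurd ((this ▸ hqb).trans hbk) hk'
    linarith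
  · have h3 : H (E (Btilde B (N+1))) x ≤ H (E (Btilde B N)) x := by
      refine H_mono ?_ x
      intro k hk
      rw [mem_E] at *
      intro b hb
      refine hk b ⟨hb.1, fun q hq hqb => ?_⟩
      have := hb.2 q hq hqb
      have : q ≠ N + 1 := by rintro rfl; exact hp hq
      omega
    linarith [H_nonneg (E (Btilde B N)) x]

theorem Btilde_zero (B : Set ℕ) : Btilde B 0 = B := by
  ext b; simp only [Btilde, mem_ofPred_eq, and_iff_left_iff_imp]
  exact fun _ p hp _ => hp.pos

theorem harm_ratio : Tendsto (fun n : ℕ => (Real.log n)⁻¹ * (harmonic n : ℝ)) atTop (𝓝 1) := by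
  have h1 : Tendsto (fun n : ℕ => (Real.log n)⁻¹) atTop (𝓝 0) :=
    (Real.tendsto_log_atTop.comp tendsto_natCast_atTop_atTop).inv_tendsto_atTop
  have h2 : Tendsto (fun n : ℕ => (Real.log n)⁻¹ + 1) atTop (𝓝 1) := by
    simpa using h1.add_const 1
  refine tendsto_of_tendsto_of_tendsto_of_le_of_le' tendsto_const_nhds h2 ?_ ?_
  · filter_upwards [eventually_ge_atTop 2] with n hn
    have hl : 0 < Real.log n := Real.log_pos (by exact_mod_cast hn)
    rw [le_inv_mul_iff₀ hl, mul_one]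
    refine le_trans (Real.log_le_log (by positivity) ?_) (log_add_one_le_harmonic n)
    push_cast; linarith
  · filter_upwards [eventually_ge_atTop 2] with n hn
    have hl : 0 < Real.log n := Real.log_pos (by exact_mod_cast hn)
    rw [inv_mul_le_iff₀ hl]
    have := harmonic_le_one_add_log n
    field_simp
    linarith

theorem behrend_iff (B : Set ℕ) :
    IsBehrend B ↔ Tendsto (fun n : ℕ => (Real.log n)⁻¹ * H (E B) n) atTop (𝓝 0) := by
  have hsum : ∀ n : ℕ, logWeight (multiplesZ B) n + (Real.log n)⁻¹ * H (E B) n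
      = (Real.log n)⁻¹ * (harmonic n : ℝ) := by
    intro n
    rw [logWeight_eq, E, ← H_compl (tr (multiplesZ B)) n]; ring
  constructor
  · intro h
    have h : logDensLow (multiplesZ B) = 1 := h
    rw [tendsto_order]
    constructor
    · intro a ha
      filter_upwards [eventually_ge_atTop 2] with n hn
      have hl : 0 < Real.log n := Real.log_pos (by exact_mod_cast hn)
      exact lt_of_lt_of_le ha (mul_nonneg (by positivity) (H_nonneg _ _))
    · intro a ha
      filter_upwards [ev_of_lt (multiplesZ B) (1 - a/2) (by rw [h]; linarith),
        harm_ratio.eventually (gt_mem_nhds (show 1 < 1 + a/2 by linarith))] with n h1 h2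
      linarith [hsum n]
  · intro h
    have h1 := harm_ratio.sub h
    rw [sub_zero] at h1
    have h2 : Tendsto (logWeight (multiplesZ B)) atTop (𝓝 1) :=
      h1.congr fun n => by linarith [hsum n]
    exact h2.liminf_eq

theorem behrend_tilde (B : Set ℕ) (h : IsBehrend B) (N : ℕ) : IsBehrend (Btilde B N) := by
  induction N with
  | zero => rwa [Btilde_zero]
  | succ N ih =>
    rw [behrend_iff] at *
    have h2 := ih.const_mul 2
    rw [mul_zero] at h2
    refine squeeze_zero' ?_ ?_ h2
    · filter_upwards [eventually_ge_atTop 2] with n hn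
      have hl : 0 < Real.log n := Real.log_pos (by exact_mod_cast hn)
      exact mul_nonneg (by positivity) (H_nonneg _ _)
    · filter_upwards [eventually_ge_atTop 2] with n hn
      have hl : 0 < Real.log n := Real.log_pos (by exact_mod_cast hn)
      have := mul_le_mul_of_nonneg_left (E_step B N n) (inv_pos.mpr hl).le
      linarith

/-- smooth numbers -/
def Sm (K : ℕ) : Set ℕ := {n | n ≠ 0 ∧ ∀ p : ℕ, p.Prime → p ∣ n → p ≤ K}
/-- rough numbers -/
def Ro (K : ℕ) : Set ℕ := {n | n ≠ 0 ∧ ∀ p : ℕ, p.Prime → p ∣ n → K < p}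

theorem SmRo_coprime {K u v : ℕ} (hu : ∀ p : ℕ, p.Prime → p ∣ u → p ≤ K)
    (hv : ∀ p : ℕ, p.Prime → p ∣ v → K < p) : u.Coprime v :=
  Nat.coprime_of_dvd fun p hp h1 h2 => by
    have := hu p hp h1; have := hv p hp h2; omega

theorem SmRo_surj (K n : ℕ) (hn : n ≠ 0) : ∃ u ∈ Sm K, ∃ v ∈ Ro K, u * v = n := by
  induction n using induction_on_primes with
  | zero => exact absurd rfl hn
  | one =>
    refine ⟨1, ⟨one_ne_zero, ?_⟩, 1, ⟨one_ne_zero, ?_⟩, rfl⟩ <;>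
    · intro p hp h; exact absurd (Nat.dvd_one.mp h) hp.one_lt.ne'
  | prime_mul p a hp ih =>
    have ha : a ≠ 0 := by rintro rfl; simp at hn
    obtain ⟨u, hu, v, hv, rfl⟩ := ih ha
    by_cases hpK : p ≤ K
    · refine ⟨p * u, ⟨mul_ne_zero hp.ne_zero hu.1, ?_⟩, v, hv, by ring⟩
      intro q hq hd
      rcases (hq.dvd_mul).mp hd with h | h
      · rw [(Nat.prime_dvd_prime_iff_eq hq hp).mp h]; exact hpK
      · exact hu.2 q hq h
    · refine ⟨u, hu, p * v, ⟨mul_ne_zero hp.ne_zero hv.1, ?_⟩, by ring⟩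
      intro q hq hd
      rcases (hq.dvd_mul).mp hd with h | h
      · rw [(Nat.prime_dvd_prime_iff_eq hq hp).mp h]; omega
      · exact hv.2 q hq h

theorem SmRo_inj (K : ℕ) : Function.Injective (fun x : Sm K × Ro K => (x.1 : ℕ) * (x.2 : ℕ)) := by
  rintro ⟨⟨u, hu⟩, ⟨v, hv⟩⟩ ⟨⟨u', hu'⟩, ⟨v', hv'⟩⟩ h
  have h : u * v = u' * v' := h
  have h1 : u ∣ u' := (SmRo_coprime hu.2 hv'.2).dvd_of_dvd_mul_right (h ▸ Dvd.intro _ rfl)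
  have h2 : u' ∣ u := (SmRo_coprime hu'.2 hv.2).dvd_of_dvd_mul_right (h ▸ Dvd.intro _ rfl)
  have h3 : u = u' := Nat.dvd_antisymm h1 h2
  subst h3
  have h4 : v = v' := Nat.eq_of_mul_eq_mul_left (Nat.pos_of_ne_zero hu.1) h
  subst h4
  rfl

theorem S_prod (K : ℕ) (T P Q : Set ℕ) (s : ℝ) (hs : 1 < s)
    (h : ∀ u ∈ Sm K, ∀ v ∈ Ro K, (u * v ∈ T ↔ u ∈ P ∧ v ∈ Q)) :
    S T s = (∑' u : Sm K, P.indicator (fun n : ℕ => 1 / (n : ℝ) ^ s) u) *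
      (∑' v : Ro K, Q.indicator (fun n : ℕ => 1 / (n : ℝ) ^ s) v) := by
  have h1 : Summable (fun u : Sm K => P.indicator (fun n : ℕ => 1 / (n : ℝ) ^ s) u) :=
    (smT P s hs).subtype _
  have h2 : Summable (fun v : Ro K => Q.indicator (fun n : ℕ => 1 / (n : ℝ) ^ s) v) :=
    (smT Q s hs).subtype _
  rw [tsum_mul_tsum_of_summable_norm h1.norm h2.norm, S]
  rw [← (SmRo_inj K).tsum_eq]
  · refine tsum_congr ?_
    rintro ⟨⟨u, hu⟩, ⟨v, hv⟩⟩
    have := h u hu v hv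
    by_cases hP : u ∈ P <;> by_cases hQ : v ∈ Q <;>
      simp only [hP, hQ, and_self, and_true, and_false, iff_true, iff_false] at this <;>
      simp [hP, hQ, this]
    rw [Real.mul_rpow (by positivity) (by positivity), mul_inv, mul_comm]
  · intro n hn
    have hn0 : n ≠ 0 := by
      rintro rfl
      apply hn
      by_cases h : 0 ∈ T
      · rw [indicator_of_mem h]; simp [Real.zero_rpow (by linarith : s ≠ 0)]
      · rw [indicator_of_notMem h]
    obtain ⟨u, hu, v, hv, rfl⟩ := SmRo_surj K n hn0
    exact ⟨⟨⟨u, hu⟩, ⟨v, hv⟩⟩, rfl⟩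

/-- truncation -/
def trunc (B : Set ℕ) (K : ℕ) : Set ℕ := {b ∈ B | b ≤ K}

theorem indep (B : Set ℕ) (hB0 : 0 ∉ B) (K : ℕ) (s : ℝ) (hs : 1 < s) :
    S (E B) s * Z s ≤ S (E (trunc B K)) s * S (E (Btilde B K)) s := by
  have hsm : ∀ u v : ℕ, v ∈ Ro K → (u * v ∈ E (trunc B K) ↔ u ∈ E (trunc B K)) := by
    intro u v hv
    rw [mem_E, mem_E]
    refine forall₂_congr fun b hb => not_congr ⟨fun h => ?_, fun h => h.mul_right v⟩
    refine (SmRo_coprime (K := K) (u := b) (fun p _ h => ?_) hv.2).dvd_of_dvd_mul_right h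
    exact (Nat.le_of_dvd (Nat.pos_of_ne_zero (by rintro rfl; exact hB0 hb.1)) h).trans hb.2
  have hro : ∀ u v : ℕ, u ∈ Sm K → (u * v ∈ E (Btilde B K) ↔ v ∈ E (Btilde B K)) := by
    intro u v hu
    rw [mem_E, mem_E]
    refine forall₂_congr fun b hb => not_congr ⟨fun h => ?_, fun h => h.mul_left u⟩
    exact (SmRo_coprime hu.2 hb.2).symm.dvd_of_dvd_mul_left h
  have e1 := S_prod K (E (trunc B K) ∩ E (Btilde B K)) (E (trunc B K)) (E (Btilde B K)) s hs
    (fun u hu v hv => by rw [mem_inter_iff, hsm u v hv, hro u v hu])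
  have e2 := S_prod K (E (trunc B K)) (E (trunc B K)) univ s hs
    (fun u hu v hv => by simp [hsm u v hv])
  have e3 := S_prod K (E (Btilde B K)) univ (E (Btilde B K)) s hs
    (fun u hu v hv => by simp [hro u v hu])
  have e4 := S_prod K univ univ univ s hs (fun u hu v hv => by simp)
  have hu : S univ s = Z s := by simp [S, Z]
  have hle : S (E B) s ≤ S (E (trunc B K) ∩ E (Btilde B K)) s := by
    refine S_mono (fun n hn => ?_) s hs
    rw [mem_inter_iff, mem_E, mem_E]
    rw [mem_E] at hn
    exact ⟨fun b hb => hn b hb.1, fun b hb => hn b hb.1⟩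
  refine (mul_le_mul_of_nonneg_right hle (Z_pos s hs).le).trans (le_of_eq ?_)
  rw [← hu, e1, e2, e3, e4]
  ring

theorem PE_tendsto (B : Set ℕ) : Tendsto (fun s => S (E B) s / Z s) (𝓝[>] (1:ℝ))
    (𝓝 (1 - logDensLow (multiplesZ B))) := by
  refine ((P_tendsto (multiplesZ B) (mulClosed_tr B)).const_sub 1).congr' ?_
  filter_upwards [self_mem_nhdsWithin] with s hs
  have hZ := Z_pos s hs
  have := S_compl (tr (multiplesZ B)) s hs
  rw [E]
  field_simp
  linarith

theorem dens_indep (B : Set ℕ) (hB0 : 0 ∉ B) (K : ℕ) :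
    1 - logDensLow (multiplesZ B) ≤ (1 - logDensLow (multiplesZ (trunc B K))) *
      (1 - logDensLow (multiplesZ (Btilde B K))) := by
  refine le_of_tendsto_of_tendsto (PE_tendsto B)
    ((PE_tendsto (trunc B K)).mul (PE_tendsto (Btilde B K))) ?_
  filter_upwards [self_mem_nhdsWithin] with s hs
  have hZ := Z_pos s hs
  have := indep B hB0 K s hs
  rw [div_mul_div_comm, div_le_div_iff₀ hZ (by positivity)]
  nlinarith

theorem dens_mono {B B' : Set ℕ} (h : B ⊆ B') :
    logDensLow (multiplesZ B) ≤ logDensLow (multiplesZ B') := by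
  refine le_of_tendsto_of_tendsto (P_tendsto _ (mulClosed_tr B)) (P_tendsto _ (mulClosed_tr B')) ?_
  filter_upwards [self_mem_nhdsWithin] with s hs
  exact div_le_div_of_nonneg_right (S_mono (tr_mono h) s hs) (Z_pos s hs).le

theorem dens_nonneg (B : Set ℕ) : 0 ≤ logDensLow (multiplesZ B) :=
  le_logDensLow _ 0 ((logDens_bdd _).mono fun _ h => h.1)

theorem dens_le_one (B : Set ℕ) : logDensLow (multiplesZ B) ≤ 1 := by
  have : 0 ≤ 1 - logDensLow (multiplesZ B) := by
    refine ge_of_tendsto (PE_tendsto B) ?_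
    filter_upwards [self_mem_nhdsWithin] with s hs
    exact div_nonneg (S_nonneg _ _) (Z_pos s hs).le
  linarith

theorem dens_trunc (B : Set ℕ) (hB0 : 0 ∉ B) (c : ℝ) (hc : c < logDensLow (multiplesZ B)) :
    ∃ K, c < logDensLow (multiplesZ (trunc B K)) := by
  obtain ⟨s, hs, h⟩ := (((P_tendsto _ (mulClosed_tr B)).eventually (lt_mem_nhds hc)).and
    self_mem_nhdsWithin).exists
  have h : 1 < s := h
  have h2 := (SP_tendsto (tr (multiplesZ B)) s h).div_const (Z s)
  obtain ⟨K, hK⟩ := (h2.eventually (lt_mem_nhds hs)).exists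
  refine ⟨K, hK.trans_le (le_trans ?_ (logDensLow_ge _ (mulClosed_tr (trunc B K)) s h))⟩
  refine div_le_div_of_nonneg_right ?_ (Z_pos s h).le
  refine le_trans (le_of_eq ?_) (SP_le _ s h K)
  refine Finset.sum_congr rfl fun n hn => ?_
  have hn := Finset.mem_Ioc.mp hn
  have : n ∈ tr (multiplesZ B) ↔ n ∈ tr (multiplesZ (trunc B K)) := by
    rw [mem_tr, mem_tr]
    constructor
    · rintro ⟨b, hb, hd⟩
      exact ⟨b, ⟨hb, (Nat.le_of_dvd hn.1 hd).trans hn.2⟩, hd⟩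
    · rintro ⟨b, hb, hd⟩
      exact ⟨b, hb.1, hd⟩
  simp only [indicator_apply, this]

/-- A primitive set `B` is not Behrend if and only if `δ(M_{B̃^(N)}) → 0` as `N → ∞`. -/
theorem not_behrend_iff_tendsto_zero (B : Set ℕ) (hB0 : 0 ∉ B) (hprim : Primitive B) :
    ¬ IsBehrend B ↔
      Tendsto (fun N : ℕ => logDensLow (multiplesZ (Btilde B N))) atTop (𝓝 0) := by
  constructor
  · intro hnb
    have hanti : Antitone (fun N : ℕ => logDensLow (multiplesZ (Btilde B N))) := by
      intro N N' h
      exact dens_mono fun b hb => ⟨hb.1, fun p hp hd => h.trans_lt (hb.2 p hp hd)⟩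
    have hbdd : BddBelow (range fun N : ℕ => logDensLow (multiplesZ (Btilde B N))) :=
      ⟨0, by rintro _ ⟨N, rfl⟩; exact dens_nonneg _⟩
    have ht := tendsto_atTop_ciInf hanti hbdd
    set c := ⨅ N, logDensLow (multiplesZ (Btilde B N)) with hcdef
    have hc0 : 0 ≤ c := le_ciInf fun N => dens_nonneg _
    have hcN : ∀ N, c ≤ logDensLow (multiplesZ (Btilde B N)) := fun N => ciInf_le hbdd N
    set d := logDensLow (multiplesZ B) with hd
    have hd1 : d < 1 := lt_of_le_of_ne (dens_le_one B) hnb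
    have hc1 : c ≤ 1 := (hcN 0).trans (dens_le_one _)
    have key : ∀ ε, 0 < ε → 1 - d ≤ (1 - d + ε) * (1 - c) := by
      intro ε hε
      obtain ⟨K, hK⟩ := dens_trunc B hB0 (d - ε) (by linarith)
      refine (dens_indep B hB0 K).trans ?_
      exact mul_le_mul (by linarith) (by linarith [hcN K])
        (by linarith [dens_le_one (Btilde B K)]) (by linarith)
    have hfin : 1 - d ≤ (1 - d) * (1 - c) := by
      refine le_of_forall_pos_le_add fun ε hε => ?_
      have := key ε hε
      nlinarith
    have : c = 0 := by nlinarith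
    rwa [this] at ht
  · intro ht hb
    have h1 : (fun N : ℕ => logDensLow (multiplesZ (Btilde B N))) = fun _ => 1 :=
      funext fun N => behrend_tilde B hb N
    rw [h1] at ht
    exact zero_ne_one (tendsto_nhds_unique ht tendsto_const_nhds)
end
end

section
/- Let ℬ ⊆ ℕ be a primitive set, H the closure of the image of the diagonal embedding Δ : ℤ → ∏_{b∈ℬ} ℤ/bℤ with normalized Haar measure m_H, and for N ∈ ℕ let W_{ℬ̃^(N)} := {h ∈ H : h_b ≠ 0 for all b ∈ ℬ with no prime factor ≤ N}. Then the set W_∞ := ⋃_{N∈ℕ} W_{ℬ̃^(N)} satisfies m_H(W_∞) ∈ {0,1}. -/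
open Filter Set Topology MeasureTheory

open scoped Classical

noncomputable section

/-- The diagonal embedding `Δ : ℤ → ∏_{b ∈ B} ℤ/bℤ`. -/
def diagEmb (B : Set ℕ) : ℤ →+ ((b : B) → ZMod b) where
  toFun n := fun b => (n : ZMod b)
  map_zero' := by ext b; simp
  map_add' m n := by ext b; simp [Int.cast_add]

/-- `H`, the topological closure of `Δ(ℤ)`, as a (closed) subgroup of `∏_{b ∈ B} ℤ/bℤ`. -/
def Hgrp (B : Set ℕ) : AddSubgroup ((b : B) → ZMod b) :=
  (diagEmb B).range.topologicalClosure

instance (B : Set ℕ) [∀ b : B, NeZero (b : ℕ)] : CompactSpace (Hgrp B) :=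
  isCompact_iff_compactSpace.mp ((AddSubgroup.isClosed_topologicalClosure _).isCompact)

instance (B : Set ℕ) : MeasurableSpace (Hgrp B) := borel _

instance (B : Set ℕ) : BorelSpace (Hgrp B) := ⟨rfl⟩

/-- The normalized Haar measure `m_H` on the compact abelian group `H`. -/
def mH (B : Set ℕ) [∀ b : B, NeZero (b : ℕ)] : Measure (Hgrp B) :=
  Measure.addHaarMeasure ⊤

/-- The window `W_{B'} ⊆ H` determined by a subset `B' ⊆ B`. -/
def Wset (B : Set ℕ) (B' : Set ℕ) : Set (Hgrp B) :=
  {h | ∀ b : B, (b : ℕ) ∈ B' → (h : (b : B) → ZMod b) b ≠ 0}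

lemma exists_smooth_rough (N b : ℕ) (hb : b ≠ 0) : ∃ s r : ℕ, b = s * r ∧
    (∀ p : ℕ, p.Prime → p ∣ s → p ≤ N) ∧ (∀ p : ℕ, p.Prime → p ∣ r → N < p) := by
  induction b using induction_on_primes with
  | zero => exact absurd rfl hb
  | one =>
    refine ⟨1, 1, rfl, ?_, ?_⟩ <;>
    · intro p hp h
      exact absurd (Nat.dvd_one.1 h) hp.one_lt.ne'
  | prime_mul q a hq ih =>
    obtain ⟨s, r, h, hs, hr⟩ := ih (by rintro rfl; simp at hb)
    by_cases hqN : q ≤ N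
    · refine ⟨q * s, r, by rw [h]; ring, ?_, hr⟩
      intro p hp hd
      rcases (hp.dvd_mul).1 hd with h1 | h1
      · rw [(Nat.prime_dvd_prime_iff_eq hp hq).1 h1]; exact hqN
      · exact hs p hp h1
    · refine ⟨s, q * r, by rw [h]; ring, hs, ?_⟩
      intro p hp hd
      rcases (hp.dvd_mul).1 hd with h1 | h1
      · rw [(Nat.prime_dvd_prime_iff_eq hp hq).1 h1]; omega
      · exact hr p hp h1

lemma coprime_smooth_rough {N s r : ℕ} (hs : ∀ p : ℕ, p.Prime → p ∣ s → p ≤ N)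
    (hr : ∀ p : ℕ, p.Prime → p ∣ r → N < p) : s.Coprime r :=
  Nat.coprime_of_dvd fun p hp h1 h2 => by
    have := hs p hp h1
    have := hr p hp h2
    omega

lemma mem_Hgrp_of_finite (B : Set ℕ) (x : (b : B) → ZMod b)
    (hx : ∀ F : Finset B, ∃ n : ℤ, ∀ b ∈ F, x b = (n : ZMod b)) : x ∈ Hgrp B := by
  choose n hn using hx
  change x ∈ closure ((diagEmb B).range : Set ((b : B) → ZMod b))
  refine mem_closure_of_tendsto (b := atTop) (f := fun F : Finset B => diagEmb B (n F)) ?_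
    (Eventually.of_forall fun F => ⟨n F, rfl⟩)
  rw [tendsto_pi_nhds]
  intro b
  refine tendsto_const_nhds.congr' ?_
  filter_upwards [eventually_ge_atTop {b}] with F hF
  exact hn F b (hF (by simp))

lemma exists_approx (B : Set ℕ) [∀ b : B, NeZero (b : ℕ)] (N : ℕ) :
    ∃ k : Hgrp B, (∀ b : B, (b : ℕ) ∈ Btilde B N → (k : (b : B) → ZMod b) b = 0) ∧
      (∀ b : B, (b : ℕ) ≤ N → (k : (b : B) → ZMod b) b = 1) := by
  choose s r hsr hs hr using fun b : B => exists_smooth_rough N b (NeZero.ne (b : ℕ))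
  have hco : ∀ b c, (s b).Coprime (r c) := fun b c => coprime_smooth_rough (hs b) (hr c)
  let e : B → ℕ := fun b => (Nat.chineseRemainder (hco b b) 1 0 : ℕ)
  have he1 : ∀ b, e b ≡ 1 [MOD s b] := fun b => (Nat.chineseRemainder (hco b b) 1 0).2.1
  have he0 : ∀ b, e b ≡ 0 [MOD r b] := fun b => (Nat.chineseRemainder (hco b b) 1 0).2.2
  refine ⟨⟨fun b => (e b : ZMod b), mem_Hgrp_of_finite B _ ?_⟩, ?_, ?_⟩
  · intro F
    have hc : (∏ b ∈ F, s b).Coprime (∏ b ∈ F, r b) :=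
      Nat.Coprime.prod_left fun b _ => Nat.Coprime.prod_right fun c _ => hco b c
    obtain ⟨n, hn1, hn0⟩ := Nat.chineseRemainder hc 1 0
    refine ⟨n, fun b hb => ?_⟩
    have h1 : e b ≡ n [MOD s b] := (he1 b).trans (hn1.of_dvd (Finset.dvd_prod_of_mem s hb)).symm
    have h0 : e b ≡ n [MOD r b] := (he0 b).trans (hn0.of_dvd (Finset.dvd_prod_of_mem r hb)).symm
    have h := (Nat.modEq_and_modEq_iff_modEq_mul (hco b b)).1 ⟨h1, h0⟩
    rw [← hsr b] at h
    simpa using (ZMod.natCast_eq_natCast_iff _ _ _).2 h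
  · intro b hb
    have hs1 : s b = 1 := by
      by_contra h
      obtain ⟨p, hp, hd⟩ := Nat.exists_prime_and_dvd h
      have h1 := hs b p hp hd
      have h2 := hb.2 p hp (hd.trans ⟨r b, hsr b⟩)
      omega
    have h := he0 b
    have hb' : r b = b := by rw [hsr b, hs1, one_mul]
    rw [hb'] at h
    simpa using (ZMod.natCast_eq_natCast_iff _ _ _).2 h
  · intro b hb
    have hr1 : r b = 1 := by
      by_contra h
      obtain ⟨p, hp, hd⟩ := Nat.exists_prime_and_dvd h
      have h1 := hr b p hp hd
      have h2 := Nat.le_of_dvd (Nat.pos_of_ne_zero (NeZero.ne (b : ℕ)))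
        (hd.trans ⟨s b, (hsr b).trans (mul_comm _ _)⟩)
      omega
    have h := he1 b
    have hb' : s b = b := by rw [hsr b, hr1, mul_one]
    rw [hb'] at h
    simpa using (ZMod.natCast_eq_natCast_iff _ _ _).2 h

lemma Btilde_anti (B : Set ℕ) {M N : ℕ} (h : M ≤ N) : Btilde B N ⊆ Btilde B M :=
  fun _ hb => ⟨hb.1, fun p hp hd => h.trans_lt (hb.2 p hp hd)⟩

/-- The tail subgroup: elements vanishing on some `B̃^(N)`. -/
def tailGrp (B : Set ℕ) : AddSubgroup (Hgrp B) where
  carrier := {g | ∃ N, ∀ b : B, (b : ℕ) ∈ Btilde B N → (g : (b : B) → ZMod b) b = 0}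
  zero_mem' := ⟨0, fun _ _ => rfl⟩
  add_mem' := by
    rintro g h ⟨M, hM⟩ ⟨N, hN⟩
    refine ⟨max M N, fun b hb => ?_⟩
    have h1 := hM b (Btilde_anti B (le_max_left _ _) hb)
    have h2 := hN b (Btilde_anti B (le_max_right _ _) hb)
    simp [h1, h2]
  neg_mem' := by
    rintro g ⟨M, hM⟩
    refine ⟨M, fun b hb => ?_⟩
    simp [hM b hb]

lemma tail_add_mem (B : Set ℕ) {g h : Hgrp B} (hg : g ∈ tailGrp B)
    (hh : h ∈ ⋃ N : ℕ, Wset B (Btilde B N)) : g + h ∈ ⋃ N : ℕ, Wset B (Btilde B N) := by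
  obtain ⟨M, hM⟩ := hg
  obtain ⟨N, hN⟩ := mem_iUnion.1 hh
  refine mem_iUnion.2 ⟨max M N, fun b hb => ?_⟩
  have h1 := hM b (Btilde_anti B (le_max_left _ _) hb)
  have h2 := hN b (Btilde_anti B (le_max_right _ _) hb)
  simpa [h1] using h2

lemma dense_tailGrp (B : Set ℕ) [∀ b : B, NeZero (b : ℕ)] : Dense (tailGrp B : Set (Hgrp B)) := by
  choose k hk0 hk1 using exists_approx B
  let one : Hgrp B := ⟨diagEmb B 1, AddSubgroup.le_topologicalClosure _ ⟨1, rfl⟩⟩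
  have hone : one ∈ (tailGrp B).topologicalClosure := by
    change one ∈ closure (tailGrp B : Set (Hgrp B))
    refine mem_closure_of_tendsto (b := atTop) (f := k) ?_
      (Eventually.of_forall fun N => ⟨N, hk0 N⟩)
    rw [tendsto_subtype_rng, tendsto_pi_nhds]
    intro b
    refine tendsto_const_nhds.congr' ?_
    filter_upwards [eventually_ge_atTop (b : ℕ)] with N hN
    rw [hk1 N b hN]
    simp [one, diagEmb]
  intro x
  have hx : (x : (b : B) → ZMod b) ∈ closure ((diagEmb B).range : Set ((b : B) → ZMod b)) := x.2
  have hx' : x ∈ closure ((fun n : ℤ => n • one) '' univ) := by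
    rw [closure_subtype]
    refine closure_mono ?_ hx
    rintro _ ⟨n, rfl⟩
    refine ⟨n • one, ⟨n, trivial, rfl⟩, ?_⟩
    change n • diagEmb B 1 = _
    rw [← map_zsmul]; simp
  refine closure_minimal ?_ isClosed_closure hx'
  rintro _ ⟨n, -, rfl⟩
  exact (tailGrp B).topologicalClosure.zsmul_mem hone n

/-- Zero-one law: the union `W_∞ = ⋃_N W_{B̃^(N)}` has Haar measure `0` or `1`. -/
theorem haar_Winfty_zero_or_one (B : Set ℕ) [∀ b : B, NeZero (b : ℕ)] (hprim : Primitive B) :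
    mH B (⋃ N : ℕ, Wset B (Btilde B N)) = 0 ∨ mH B (⋃ N : ℕ, Wset B (Btilde B N)) = 1 := by
  have huniv : mH B univ = 1 := by
    have := Measure.addHaarMeasure_self (K₀ := (⊤ : TopologicalSpace.PositiveCompacts (Hgrp B)))
    simpa [mH] using this
  have : IsProbabilityMeasure (mH B) := ⟨huniv⟩
  have : (mH B).IsAddHaarMeasure := by unfold mH; infer_instance
  have : (mH B).Regular := by unfold mH; infer_instance
  have : ∀ b : B, SecondCountableTopology (ZMod b) := fun b =>
    have : Countable (ZMod b) := Finite.to_countable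
    inferInstance
  have : SecondCountableTopology ((b : B) → ZMod b) := inferInstance
  have : SecondCountableTopology (Hgrp B) :=
    TopologicalSpace.Subtype.secondCountableTopology _
  have hm : MeasurableSet (⋃ N : ℕ, Wset B (Btilde B N)) := by
    refine MeasurableSet.iUnion fun N => IsClosed.measurableSet ?_
    have : Wset B (Btilde B N) = ⋂ b : B, ⋂ _ : (b : ℕ) ∈ Btilde B N,
        (fun h : Hgrp B => (h : (b : B) → ZMod b) b) ⁻¹' {0}ᶜ := by
      ext h; simp [Wset]
    rw [this]
    refine isClosed_iInter fun b => isClosed_iInter fun _ => ?_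
    exact (isClosed_discrete _).preimage ((continuous_apply b).comp continuous_subtype_val)
  have hc : EventuallyConst (⋃ N : ℕ, Wset B (Btilde B N)) (ae (mH B)) := by
    refine aeconst_of_dense_setOfPred_preimage_vadd_eq (M := Hgrp B) hm.nullMeasurableSet
      ((dense_tailGrp B).mono fun g hg => ?_)
    ext h
    refine ⟨fun hh => ?_, fun hh => tail_add_mem B hg hh⟩
    have := tail_add_mem B (neg_mem hg) hh
    simpa using this
  rcases eventuallyConst_set'.1 hc with h | h
  · left; rw [measure_congr h, measure_empty]
  · right; rw [measure_congr h, huniv]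
end
end

section
/- Let ℬ ⊆ ℕ, let H be the closure of the image of the diagonal embedding Δ : ℤ → ∏_{b∈ℬ} ℤ/bℤ with normalized Haar measure m_H, let ℬ' ⊆ ℬ be finite, and let (r_b)_{b∈ℬ'} with r_b ∈ ℤ/bℤ be such that the cylinder set C := {h ∈ H : h_b = r_b for all b ∈ ℬ'} is nonempty. Then m_H(C) = 1/lcm(ℬ'). -/
open Filter Set Topology MeasureTheory

open scoped Classical

noncomputable section

/-- Every nonempty cylinder set in `H` determined by finitely many coordinates
`b ∈ B'` has Haar measure `1 / lcm(B')`. -/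
theorem haar_cylinder (B : Set ℕ) [∀ b : B, NeZero (b : ℕ)] (B' : Finset ℕ) (hB'B : ↑B' ⊆ B)
    (r : (b : ℕ) → ZMod b)
    (hne : {h : Hgrp B | ∀ b : B, (b : ℕ) ∈ B' → (h : (b : B) → ZMod b) b = r b}.Nonempty) :
    mH B {h : Hgrp B | ∀ b : B, (b : ℕ) ∈ B' → (h : (b : B) → ZMod b) b = r b} =
      (((B'.lcm id : ℕ) : ENNReal))⁻¹ := by
  classical
  set L : ℕ := B'.lcm id with hL
  have hL0 : L ≠ 0 := by
    intro h0
    rw [hL, Finset.lcm_eq_zero_iff] at h0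
    obtain ⟨b, hb, hb0⟩ := h0
    have : NeZero ((⟨b, hB'B hb⟩ : B) : ℕ) := inferInstance
    exact this.out hb0
  haveI : (mH B).IsAddHaarMeasure := by unfold mH; infer_instance
  have huniv : mH B univ = 1 := by
    have h := Measure.addHaarMeasure_self (K₀ := (⊤ : TopologicalSpace.PositiveCompacts (Hgrp B)))
    simpa [mH] using h
  have hΔ : ∀ n : ℤ, diagEmb B n ∈ Hgrp B := fun n =>
    AddSubgroup.le_topologicalClosure _ ⟨n, rfl⟩
  let S : ℕ → Set (Hgrp B) := fun n =>
    {h | ∀ b : B, (b : ℕ) ∈ B' → (h : (b : B) → ZMod b) b = (n : ZMod b)}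
  have hBfin : {b : B | (b : ℕ) ∈ B'}.Finite :=
    Set.Finite.preimage Subtype.val_injective.injOn B'.finite_toSet
  have hopen : ∀ n, IsOpen (S n) := by
    intro n
    have : S n = ⋂ b ∈ {b : B | (b : ℕ) ∈ B'},
        {h : Hgrp B | (h : (b : B) → ZMod b) b = (n : ZMod b)} := by
      ext h; simp [S]
    rw [this]
    refine hBfin.isOpen_biInter fun b _ => ?_
    have hc : Continuous fun h : Hgrp B => (h : (b : B) → ZMod b) b :=
      (continuous_apply b).comp continuous_subtype_val
    exact (isOpen_discrete {(n : ZMod b)}).preimage hc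
  obtain ⟨h0, hh0⟩ := hne
  have hmeas : ∀ n, mH B (S n) =
      mH B {h : Hgrp B | ∀ b : B, (b : ℕ) ∈ B' → (h : (b : B) → ZMod b) b = r b} := by
    intro n
    rw [← measure_preimage_add (mH B) ((⟨diagEmb B n, hΔ n⟩ : Hgrp B) - h0) (S n)]
    congr 1
    ext h
    simp only [S, mem_preimage, mem_setOf_eq]
    refine forall_congr' fun b => forall_congr' fun hb => ?_
    have h1 := hh0 b hb
    have h2 : diagEmb B n b = (n : ZMod b) := by simp [diagEmb]
    have h3 : (((⟨diagEmb B n, hΔ n⟩ : Hgrp B) - h0 + h : Hgrp B) : (b : B) → ZMod b) b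
      = (n : ZMod b) - r b + (h : (b : B) → ZMod b) b := by
      rw [← h1, ← h2]; rfl
    rw [h3]
    constructor
    · intro h4; linear_combination h4
    · intro h4; rw [h4]; ring
  have hcover : (⋃ n ∈ Finset.range L, S n) = univ := by
    refine eq_univ_of_forall fun h => ?_
    have hU : IsOpen {x : (b : B) → ZMod b | ∀ b : B, (b : ℕ) ∈ B' →
        x b = (h : (b : B) → ZMod b) b} := by
      have : {x : (b : B) → ZMod b | ∀ b : B, (b : ℕ) ∈ B' →
        x b = (h : (b : B) → ZMod b) b} = ⋂ b ∈ {b : B | (b : ℕ) ∈ B'},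
        {x : (b : B) → ZMod b | x b = (h : (b : B) → ZMod b) b} := by
        ext x; simp
      rw [this]
      refine hBfin.isOpen_biInter fun b _ => ?_
      have hc : Continuous fun x : (b : B) → ZMod b => x b := continuous_apply b
      exact (isOpen_discrete {(h : (b : B) → ZMod b) b}).preimage hc
    have hcl : (h : (b : B) → ZMod b) ∈ closure ((diagEmb B).range : Set ((b : B) → ZMod b)) :=
      h.2
    obtain ⟨x, hx, ⟨m, rfl⟩⟩ := mem_closure_iff.1 hcl _ hU (fun _ _ => rfl)
    have hLpos : (0 : ℤ) < L := by exact_mod_cast Nat.pos_of_ne_zero hL0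
    have e1 := Int.emod_nonneg m hLpos.ne'
    have e2 := Int.emod_lt_of_pos m hLpos
    simp only [mem_iUnion, Finset.mem_range]
    refine ⟨(m % L).toNat, by omega, fun b hb => ?_⟩
    rw [← hx b hb]
    change ((m : ℤ) : ZMod b) = _
    have e3 : (((m % L).toNat : ℕ) : ZMod b) = ((m % L : ℤ) : ZMod b) := by
      rw [← Int.cast_natCast, Int.toNat_of_nonneg e1]
    rw [e3, ZMod.intCast_eq_intCast_iff]
    have hd : ((b : ℕ) : ℤ) ∣ L := by
      exact_mod_cast (Finset.dvd_lcm (f := id) hb)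
    exact ((Int.mod_modEq m L).symm).of_dvd hd
  have hdisj : (↑(Finset.range L) : Set ℕ).PairwiseDisjoint S := by
    intro n hn m hm hnm
    refine Set.disjoint_left.2 fun h hhn hhm => hnm ?_
    have hdvd : (L : ℤ) ∣ (m : ℤ) - n := by
      rw [Int.natCast_dvd]
      refine Finset.lcm_dvd fun b hb => ?_
      have e1 := hhn ⟨b, hB'B hb⟩ hb
      have e2 := hhm ⟨b, hB'B hb⟩ hb
      have e3 : ((n : ℕ) : ZMod b) = ((m : ℕ) : ZMod b) := e1.symm.trans e2
      rw [ZMod.natCast_eq_natCast_iff, Nat.modEq_iff_dvd] at e3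
      exact Int.natCast_dvd.1 e3
    simp only [Finset.coe_range, mem_Iio] at hn hm
    exact Nat.ModEq.eq_of_lt_of_lt (Nat.modEq_iff_dvd.2 hdvd) hn hm
  have hsum := measure_biUnion_finset (μ := mH B) hdisj (fun n _ => (hopen n).measurableSet)
  rw [hcover, huniv, Finset.sum_congr rfl (fun n _ => hmeas n), Finset.sum_const,
    Finset.card_range, nsmul_eq_mul] at hsum
  exact ENNReal.eq_inv_of_mul_eq_one_left (by rw [mul_comm]; exact hsum.symm)
end
end

section
/- Let ℬ ⊆ ℕ, let H be the closure of the image of the diagonal embedding Δ : ℤ → ∏_{b∈ℬ} ℤ/bℤ with normalized Haar measure m_H. Suppose 𝒜 ⊆ ℬ and 𝒞 ⊆ ℬ are coprime to each other, i.e. gcd(a,c) = 1 for all a ∈ 𝒜 and c ∈ 𝒞. Then the σ-algebra on H generated by the coordinate maps h ↦ h_a (a ∈ 𝒜) and the σ-algebra generated by the coordinate maps h ↦ h_c (c ∈ 𝒞) are independent with respect to m_H: for V₁ measurable with respect to the first and V₂ measurable with respect to the second, m_H(V₁ ∩ V₂) = m_H(V₁)·m_H(V₂). -/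
open Filter Set Topology MeasureTheory

open scoped Classical

noncomputable section

lemma coord_meas_aux (B D : Set ℕ) (hDB : D ⊆ B) (V : Set (Hgrp B))
    (h : MeasurableSet[⨆ a : D,
      MeasurableSpace.comap (fun h : Hgrp B => (h : (b : B) → ZMod b) ⟨a, hDB a.2⟩) ⊤] V) :
    MeasurableSet V := by
  refine (iSup_le fun a => ?_ : (⨆ a : D,
      MeasurableSpace.comap (fun h : Hgrp B => (h : (b : B) → ZMod b) ⟨a, hDB a.2⟩) ⊤) ≤ _) V h
  rintro _ ⟨s, -, rfl⟩
  have hc : Continuous (fun h : Hgrp B => (h : (b : B) → ZMod b) ⟨a, hDB a.2⟩) :=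
    (continuous_apply _).comp continuous_subtype_val
  exact ((isOpen_discrete s).preimage hc).measurableSet

lemma coord_inv_aux (B D : Set ℕ) (hDB : D ⊆ B) (V : Set (Hgrp B))
    (h : MeasurableSet[⨆ a : D,
      MeasurableSpace.comap (fun h : Hgrp B => (h : (b : B) → ZMod b) ⟨a, hDB a.2⟩) ⊤] V)
    (x y : Hgrp B) (hxy : ∀ b : B, (b : ℕ) ∈ D → x.1 b = y.1 b) : x ∈ V ↔ y ∈ V := by
  rw [MeasurableSpace.measurableSet_iSup] at h
  induction h with
  | basic u hu =>
    obtain ⟨a, s, -, rfl⟩ := hu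
    simp only [mem_preimage]
    rw [hxy ⟨a, hDB a.2⟩ a.2]
  | empty => simp
  | compl t _ ih => simp only [mem_compl_iff, ih]
  | iUnion f _ ih => simp only [mem_iUnion, ih]

lemma exists_int_aux (B : Set ℕ) (h : Hgrp B) (u : Finset B) :
    ∃ n : ℤ, ∀ b ∈ u, ((n : ℤ) : ZMod b) = h.1 b := by
  have hm : h.1 ∈ closure ((diagEmb B).range : Set ((b : B) → ZMod b)) := h.2
  rw [mem_closure_iff] at hm
  obtain ⟨z, hz, n, rfl⟩ := hm {z | ∀ b ∈ u, z b = h.1 b} (by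
    have : {z : (b : B) → ZMod b | ∀ b ∈ u, z b = h.1 b}
        = Set.pi (u : Set B) (fun b => {h.1 b}) := by
      ext z; simp [Set.mem_pi]
    rw [this]
    exact isOpen_set_pi u.finite_toSet (fun _ _ => isOpen_discrete _)) (fun _ _ => rfl)
  exact ⟨n, hz⟩

lemma split_aux (B : Set ℕ) [∀ b : B, NeZero (b : ℕ)]
    (A C : Set ℕ) (hcop : ∀ a ∈ A, ∀ c ∈ C, Nat.Coprime a c) (h : Hgrp B) :
    ∃ k : Hgrp B, (∀ b : B, (b : ℕ) ∈ A → k.1 b = 0) ∧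
      (∀ b : B, (b : ℕ) ∈ C → k.1 b = h.1 b) := by
  have key := isCompact_univ.inter_iInter_nonempty (X := Hgrp B)
    (fun b : B => {k : Hgrp B | ((b : ℕ) ∈ A → k.1 b = 0) ∧ ((b : ℕ) ∈ C → k.1 b = h.1 b)})
    (fun b => by
      have hc : Continuous (fun h : Hgrp B => (h : (b : B) → ZMod b) b) :=
        (continuous_apply _).comp continuous_subtype_val
      exact (isClosed_discrete {z : ZMod b |
        ((b : ℕ) ∈ A → z = 0) ∧ ((b : ℕ) ∈ C → z = h.1 b)}).preimage hc)
    (fun u => by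
      obtain ⟨n, hn⟩ := exists_int_aux B h u
      set P : ℕ := ∏ b ∈ u.filter (fun b : B => (b : ℕ) ∈ A), (b : ℕ) with hP
      set Q : ℕ := ∏ b ∈ u.filter (fun b : B => (b : ℕ) ∈ C), (b : ℕ) with hQ
      have hPQ : Nat.Coprime P Q := by
        refine Nat.Coprime.prod_left fun a ha => Nat.Coprime.prod_right fun c hc => ?_
        exact hcop _ (Finset.mem_filter.1 ha).2 _ (Finset.mem_filter.1 hc).2
      obtain ⟨x, y, hxy⟩ := Nat.isCoprime_iff_coprime.2 hPQ
      refine ⟨⟨diagEmb B (n * (x * P)), subset_closure ⟨_, rfl⟩⟩, mem_univ _, ?_⟩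
      simp only [mem_iInter]
      intro b hb
      refine ⟨fun hA => ?_, fun hC => ?_⟩
      · have hd : (b : ℕ) ∣ P := by
          rw [hP]
          refine Finset.dvd_prod_of_mem (fun b : B => (b : ℕ)) ?_
          rw [Finset.mem_filter]
          exact ⟨hb, hA⟩
        change ((n * (x * P) : ℤ) : ZMod b) = 0
        have : ((P : ℕ) : ZMod b) = 0 := (ZMod.natCast_eq_zero_iff _ _).2 hd
        push_cast
        simp [this]
      · have hd : (b : ℕ) ∣ Q := by
          rw [hQ]
          refine Finset.dvd_prod_of_mem (fun b : B => (b : ℕ)) ?_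
          rw [Finset.mem_filter]
          exact ⟨hb, hC⟩
        change ((n * (x * P) : ℤ) : ZMod b) = h.1 b
        have h0 : ((Q : ℕ) : ZMod b) = 0 := (ZMod.natCast_eq_zero_iff _ _).2 hd
        have h1 : ((x * P + y * Q : ℤ) : ZMod b) = 1 := by rw [hxy]; simp
        push_cast at h1 ⊢
        rw [h0, mul_zero, add_zero] at h1
        rw [h1, mul_one, hn b hb])
  obtain ⟨k, -, hk⟩ := key
  simp only [mem_iInter] at hk
  exact ⟨k, fun b => (hk b).1, fun b => (hk b).2⟩

/-- If `A, C ⊆ B` are coprime to each other, then the σ-algebras generated by the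
coordinates in `A` resp. in `C` are independent for the Haar measure `m_H`. -/
theorem haar_coprime_independent (B : Set ℕ) [∀ b : B, NeZero (b : ℕ)]
    (A C : Set ℕ) (hAB : A ⊆ B) (hCB : C ⊆ B)
    (hcop : ∀ a ∈ A, ∀ c ∈ C, Nat.Coprime a c) (V₁ V₂ : Set (Hgrp B))
    (h1 : MeasurableSet[⨆ a : A,
      MeasurableSpace.comap (fun h : Hgrp B => (h : (b : B) → ZMod b) ⟨a, hAB a.2⟩) ⊤] V₁)
    (h2 : MeasurableSet[⨆ c : C,
      MeasurableSpace.comap (fun h : Hgrp B => (h : (b : B) → ZMod b) ⟨c, hCB c.2⟩) ⊤] V₂) :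
    mH B (V₁ ∩ V₂) = mH B V₁ * mH B V₂ := by
  have m1 := coord_meas_aux B A hAB V₁ h1
  have m2 := coord_meas_aux B C hCB V₂ h2
  have i1 := coord_inv_aux B A hAB V₁ h1
  have i2 := coord_inv_aux B C hCB V₂ h2
  have : ∀ b : B, Countable (ZMod b) := fun b => Finite.to_countable
  have : SecondCountableTopology (Hgrp B) :=
    TopologicalSpace.Subtype.secondCountableTopology _
  have : (mH B).IsAddHaarMeasure := by unfold mH; infer_instance
  have huniv : mH B univ = 1 := by
    have := Measure.addHaarMeasure_self (K₀ := (⊤ : TopologicalSpace.PositiveCompacts (Hgrp B)))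
    simpa [mH] using this
  set f : Hgrp B → ENNReal := V₁.indicator 1 with hf
  set g : Hgrp B → ENNReal := V₂.indicator 1 with hg
  have mf : Measurable f := measurable_one.indicator m1
  have mg : Measurable g := measurable_one.indicator m2
  have hinner : ∀ h : Hgrp B, ∫⁻ x, f (x + h) * g x ∂(mH B) = mH B (V₁ ∩ V₂) := by
    intro h
    obtain ⟨k, hkA, hkC⟩ := split_aux B A C hcop h
    have e : ∀ x, f (x + h) * g x = (V₁ ∩ V₂).indicator 1 (x + (h - k)) := by
      intro x
      have e1 : x + h ∈ V₁ ↔ x + (h - k) ∈ V₁ := i1 _ _ (fun b hb => by simp [hkA b hb])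
      have e2 : x ∈ V₂ ↔ x + (h - k) ∈ V₂ := i2 _ _ (fun b hb => by simp [hkC b hb])
      simp only [hf, hg, indicator_apply, e1, mem_inter_iff, Pi.one_apply]
      rw [if_congr e2 rfl rfl]
      by_cases a : x + (h - k) ∈ V₁ <;> by_cases b : x + (h - k) ∈ V₂ <;> simp [a, b]
    simp_rw [e]
    rw [lintegral_add_right_eq_self, lintegral_indicator_one (m1.inter m2)]
  have h3 : ∫⁻ h, ∫⁻ x, f (x + h) * g x ∂(mH B) ∂(mH B) = mH B (V₁ ∩ V₂) := by
    simp_rw [hinner]; simp [huniv]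
  rw [← h3, lintegral_lintegral_swap]
  · have : ∀ x, ∫⁻ h, f (x + h) * g x ∂(mH B) = mH B V₁ * g x := by
      intro x
      rw [lintegral_mul_const _ (by fun_prop), lintegral_add_left_eq_self,
        lintegral_indicator_one m1]
    simp_rw [this]
    rw [lintegral_const_mul _ mg, lintegral_indicator_one m2]
  · refine Measurable.aemeasurable ?_
    exact (mf.comp (measurable_snd.add measurable_fst)).mul (mg.comp measurable_snd)
end
end

section
/- Let 𝒜, 𝒞 ⊆ ℕ be coprime to each other, i.e. gcd(a,c) = 1 for all a ∈ 𝒜 and c ∈ 𝒞. Then δ(M_𝒜 ∩ M_𝒞) = δ(M_𝒜)·δ(M_𝒞), where all three logarithmic densities exist. -/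
open Filter Set Topology MeasureTheory

open scoped Classical

noncomputable section

/-- Jordan-type totient `n ^ u * ∏_{p ∣ n} (1 - p ^ (-u))`. -/
def jord (u : ℝ) (n : ℕ) : ℝ := (n : ℝ) ^ u * ∏ p ∈ n.primeFactors, (1 - (p : ℝ) ^ (-u))

lemma jord_nonneg (u : ℝ) (hu : 0 < u) (n : ℕ) : 0 ≤ jord u n := by
  unfold jord
  refine mul_nonneg (by positivity) (Finset.prod_nonneg fun p hp => ?_)
  have hp1 : (1 : ℝ) ≤ p := by exact_mod_cast (Nat.prime_of_mem_primeFactors hp).one_lt.le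
  have := Real.rpow_le_one_of_one_le_of_nonpos hp1 (by linarith : -u ≤ 0)
  linarith

def jordA (u : ℝ) : ArithmeticFunction ℝ := ⟨fun n => if n = 0 then 0 else jord u n, by simp⟩

def powA (u : ℝ) : ArithmeticFunction ℝ := ⟨fun n => if n = 0 then 0 else (n : ℝ) ^ u, by simp⟩

lemma jordA_mult (u : ℝ) : (jordA u).IsMultiplicative := by
  rw [ArithmeticFunction.IsMultiplicative.iff_ne_zero]
  refine ⟨by simp [jordA, jord], fun {m n} hm hn h => ?_⟩
  simp only [jordA, ArithmeticFunction.coe_mk, mul_eq_zero, hm, hn, or_self, if_false, jord]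
  rw [h.primeFactors_mul, Finset.prod_union h.disjoint_primeFactors, Nat.cast_mul,
    Real.mul_rpow (by positivity) (by positivity)]
  ring

lemma powA_mult (u : ℝ) : (powA u).IsMultiplicative := by
  rw [ArithmeticFunction.IsMultiplicative.iff_ne_zero]
  refine ⟨by simp [powA], fun {m n} hm hn h => ?_⟩
  simp only [powA, ArithmeticFunction.coe_mk, mul_eq_zero, hm, hn, or_self, if_false]
  rw [Nat.cast_mul, Real.mul_rpow (by positivity) (by positivity)]

lemma zeta_mul_jordA (u : ℝ) :
    ((ArithmeticFunction.zeta : ArithmeticFunction ℝ) * jordA u) = powA u := by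
  have h1 : ((ArithmeticFunction.zeta : ArithmeticFunction ℝ) * jordA u).IsMultiplicative :=
    ArithmeticFunction.isMultiplicative_zeta.natCast.mul (jordA_mult u)
  rw [h1.eq_iff_eq_on_prime_powers _ _ (powA_mult u)]
  intro p i hp
  rw [ArithmeticFunction.coe_zeta_mul_apply, Nat.sum_divisors_prime_pow hp]
  have hp0 := hp.ne_zero
  have hpr : (0 : ℝ) < p := by exact_mod_cast hp.pos
  induction i with
  | zero => simp [jordA, powA, jord]
  | succ k ih =>
    rw [Finset.sum_range_succ, ih]
    simp only [jordA, powA, ArithmeticFunction.coe_mk, pow_eq_zero_iff', hp0, false_and, if_false,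
      jord]
    rw [Nat.primeFactors_prime_pow (Nat.succ_ne_zero k) hp, Finset.prod_singleton]
    push_cast
    rw [pow_succ, Real.mul_rpow (by positivity) hpr.le, mul_sub, mul_assoc, mul_assoc,
      ← Real.rpow_add hpr]
    simp

lemma sum_jord (u : ℝ) (n : ℕ) (hn : n ≠ 0) :
    ∑ x ∈ n.divisorsAntidiagonal, jord u x.2 = (n : ℝ) ^ u := by
  have := congrArg (fun f => f n) (zeta_mul_jordA u)
  simp only [ArithmeticFunction.mul_apply] at this
  simp only [powA, ArithmeticFunction.coe_mk, hn, if_false] at this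
  rw [← this]
  refine Finset.sum_congr rfl fun x hx => ?_
  have hx' := Nat.mem_divisorsAntidiagonal.1 hx
  have h1 : x.1 ≠ 0 := by rintro h; simp [h] at hx'; omega
  have h2 : x.2 ≠ 0 := by rintro h; simp [h] at hx'; omega
  simp [jordA, h1, h2]

def wt (s : ℝ) (k : ℕ+) : ENNReal := ENNReal.ofReal ((k : ℝ) ^ (-s))

def ZZ (M : Set ℕ+) (s : ℝ) : ENNReal := ∑' k : ℕ+, if k ∈ M then wt s k else 0

lemma wt_mul (s : ℝ) (k l : ℕ+) : wt s (k * l) = wt s k * wt s l := by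
  unfold wt
  rw [← ENNReal.ofReal_mul (by positivity), PNat.mul_coe, Nat.cast_mul,
    Real.mul_rpow (by positivity) (by positivity)]

def gg (s t : ℝ) (k : ℕ+) : ENNReal := ENNReal.ofReal ((k : ℝ) ^ (-t) * jord (t - s) k)

lemma wt_eq (s t : ℝ) (hst : s < t) (n : ℕ+) :
    wt s n = ∑' x : Nat.divisorsAntidiagonal n,
      wt t (divisorsAntidiagonalFactors n x).1 * gg s t (divisorsAntidiagonalFactors n x).2 := by
  have hn : (0 : ℝ) < (n : ℕ) := by exact_mod_cast n.pos
  have : ∀ x : Nat.divisorsAntidiagonal n,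
      wt t (divisorsAntidiagonalFactors n x).1 * gg s t (divisorsAntidiagonalFactors n x).2
      = ENNReal.ofReal (((n : ℕ) : ℝ) ^ (-t) * jord (t - s) x.1.2) := by
    intro x
    have h := divisorsAntidiagonalFactors_eq x
    unfold wt gg
    rw [← ENNReal.ofReal_mul (by positivity), ← mul_assoc,
      ← Real.mul_rpow (by positivity) (by positivity), ← Nat.cast_mul]
    congr 2
    congr 1
    exact congrArg (Nat.cast (R := ℝ)) h
  simp_rw [this]
  rw [tsum_fintype, Finset.univ_eq_attach,
    Finset.sum_attach (Nat.divisorsAntidiagonal n)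
      (fun x => ENNReal.ofReal (((n : ℕ) : ℝ) ^ (-t) * jord (t - s) x.2)),
    ← ENNReal.ofReal_sum_of_nonneg, ← Finset.mul_sum, sum_jord _ _ n.ne_zero, wt,
    ← Real.rpow_add hn]
  · congr 2; ring
  · intro i _
    exact mul_nonneg (by positivity) (jord_nonneg _ (by linarith) _)

lemma ZZ_eq (M : Set ℕ+) (s t : ℝ) (hst : s < t) :
    ZZ M s = ∑' x : ℕ+ × ℕ+, if x.1 * x.2 ∈ M then wt t x.1 * gg s t x.2 else 0 := by
  rw [← sigmaAntidiagonalEquivProd.tsum_eq, ENNReal.tsum_sigma']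
  unfold ZZ
  refine tsum_congr fun n => ?_
  have : ∀ x : Nat.divisorsAntidiagonal n, (sigmaAntidiagonalEquivProd ⟨n, x⟩).1 *
      (sigmaAntidiagonalEquivProd ⟨n, x⟩).2 = n := by
    intro x
    apply PNat.eq
    exact divisorsAntidiagonalFactors_eq x
  simp_rw [this]
  split_ifs with h
  · exact wt_eq s t hst n
  · simp

lemma ZZ_mono (M : Set ℕ+) (hM : ∀ k ∈ M, ∀ l, k * l ∈ M) (s t : ℝ) (hst : s < t) :
    ZZ M t * ZZ univ s ≤ ZZ M s * ZZ univ t := by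
  have h1 : ZZ univ s = ZZ univ t * ∑' k, gg s t k := by
    rw [ZZ_eq univ s t hst, ENNReal.tsum_prod']
    simp only [mem_univ, if_true, ENNReal.tsum_mul_left, ENNReal.tsum_mul_right, ZZ]
  have h2 : ZZ M t * ∑' k, gg s t k ≤ ZZ M s := by
    rw [ZZ_eq M s t hst, ENNReal.tsum_prod', ZZ, ← ENNReal.tsum_mul_right]
    refine ENNReal.tsum_le_tsum fun k => ?_
    split_ifs with hk
    · simp only [hM k hk, if_true, ENNReal.tsum_mul_left]; exact le_rfl
    · simp
  rw [h1]
  calc _ = (ZZ M t * ∑' k, gg s t k) * ZZ univ t := by ring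
    _ ≤ _ := by gcongr

/-- Filter a multiset (classically). -/
def mfil (P : Nat.Primes → Prop) (v : Multiset Nat.Primes) : Multiset Nat.Primes :=
  Multiset.filter P v

lemma mfil_add_not (P : Nat.Primes → Prop) (v : Multiset Nat.Primes) :
    mfil P v + mfil (fun p => ¬ P p) v = v := by
  unfold mfil
  convert Multiset.filter_add_not P v

lemma mfil_mfil (P Q : Nat.Primes → Prop) (v : Multiset Nat.Primes) :
    mfil P (mfil Q v) = mfil (fun p => P p ∧ Q p) v := by
  unfold mfil
  convert Multiset.filter_filter P Q v

lemma mfil_false (v : Multiset Nat.Primes) : mfil (fun _ => False) v = 0 := by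
  unfold mfil
  convert Multiset.filter_false v

/-- Filter a multiset of primes. -/
def pfil (P : Nat.Primes → Prop) (v : PrimeMultiset) : PrimeMultiset := mfil P v

lemma pfil_add_not (P : Nat.Primes → Prop) (v : PrimeMultiset) :
    pfil P v + pfil (fun p => ¬ P p) v = v := mfil_add_not P _

lemma pfil_add (P : Nat.Primes → Prop) (v w : PrimeMultiset) :
    pfil P (v + w) = pfil P v + pfil P w := Multiset.filter_add P _ _

lemma pfil_pfil (P Q : Nat.Primes → Prop) (v : PrimeMultiset) :
    pfil P (pfil Q v) = pfil (fun p => P p ∧ Q p) v := mfil_mfil _ _ _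

lemma pfil_false (v : PrimeMultiset) : pfil (fun _ => False) v = 0 := mfil_false _

/-- The part of `k` composed of primes satisfying `P`. -/
def ppart (P : Nat.Primes → Prop) (k : ℕ+) : ℕ+ := (pfil P (PNat.factorMultiset k)).prod

lemma fm_ppart (P : Nat.Primes → Prop) (k : ℕ+) :
    (ppart P k).factorMultiset = pfil P (PNat.factorMultiset k) :=
  PrimeMultiset.factorMultiset_prod _

lemma ppart_mul_compl (P : Nat.Primes → Prop) (k : ℕ+) :
    ppart P k * ppart (fun p => ¬ P p) k = k := by
  unfold ppart
  rw [← PrimeMultiset.prod_add, pfil_add_not, PNat.prod_factorMultiset k]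

lemma ppart_mul (P : Nat.Primes → Prop) (k l : ℕ+) :
    ppart P (k * l) = ppart P k * ppart P l := by
  unfold ppart
  rw [← PrimeMultiset.prod_add, PNat.factorMultiset_mul, pfil_add]

lemma ppart_ppart (P Q : Nat.Primes → Prop) (k : ℕ+) :
    ppart P (ppart Q k) = ppart (fun p => P p ∧ Q p) k := by
  rw [ppart, fm_ppart, pfil_pfil, ppart]

lemma ppart_false (k : ℕ+) : ppart (fun _ => False) k = 1 := by
  rw [ppart, pfil_false, PrimeMultiset.prod_zero]

lemma dvd_ppart_iff (P : Nat.Primes → Prop) (d k : ℕ+)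
    (hd : ∀ p : Nat.Primes, (p : ℕ) ∣ (d : ℕ) → P p) : d ∣ ppart P k ↔ d ∣ k := by
  constructor
  · intro h; exact h.trans ⟨_, (ppart_mul_compl P k).symm⟩
  · intro h
    have : ppart P d = d := by
      have h2 : ppart (fun p => ¬ P p) d = 1 := by
        unfold ppart
        rw [show pfil (fun p => ¬ P p) (PNat.factorMultiset d) = 0 from ?_]
        · exact PrimeMultiset.prod_zero
        · unfold pfil
          refine (@Multiset.filter_eq_nil _ (fun p => ¬ P p) (fun _ => Classical.propDecidable _)
            _).2 fun p hp hn => hn (hd p ?_)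
          have : (p : ℕ+) ∈ ((d.factorMultiset : PrimeMultiset) : Multiset ℕ+) :=
            Multiset.mem_map_of_mem _ hp
          have := (PNat.mem_factorMultiset.1 this).2
          exact_mod_cast PNat.dvd_iff.1 this
      have := ppart_mul_compl P d
      rwa [h2, mul_one] at this
    obtain ⟨e, rfl⟩ := h
    rw [ppart_mul, this]
    exact Dvd.intro _ rfl

def swapE (P : Nat.Primes → Prop) : ℕ+ × ℕ+ ≃ ℕ+ × ℕ+ :=
  Function.Involutive.toPerm (fun x => (ppart P x.1 * ppart (fun p => ¬ P p) x.2,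
    ppart P x.2 * ppart (fun p => ¬ P p) x.1)) (by
    intro x
    ext1 <;> simp [ppart_mul, ppart_ppart, ppart_false, ppart_mul_compl])

def MM (A : Set ℕ) : Set ℕ+ := {k | ∃ a ∈ A, a ∣ (k : ℕ)}

lemma ZZ_inter (A C : Set ℕ) (hcop : ∀ a ∈ A, ∀ c ∈ C, Nat.Coprime a c) (s : ℝ) :
    ZZ (MM A ∩ MM C) s * ZZ univ s = ZZ (MM A) s * ZZ (MM C) s := by
  let P : Nat.Primes → Prop := fun p => ∃ a ∈ A, (p : ℕ) ∣ a
  have hAP : ∀ k l : ℕ+, k ∈ MM A ↔ ppart P k * ppart (fun p => ¬ P p) l ∈ MM A := by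
    have key : ∀ k, k ∈ MM A ↔ ppart P k ∈ MM A := by
      intro k
      refine exists_congr fun a => and_congr_right fun ha => ?_
      by_cases ha0 : a = 0
      · subst ha0; simp
      · obtain ⟨d, rfl⟩ : ∃ d : ℕ+, (d : ℕ) = a := ⟨⟨a, Nat.pos_of_ne_zero ha0⟩, rfl⟩
        have := dvd_ppart_iff P d k (fun p hp => ⟨d, ha, hp⟩)
        rw [PNat.dvd_iff, PNat.dvd_iff] at this
        exact this.symm
    intro k l
    rw [key k, key (_ * _)]
    simp [ppart_mul, ppart_ppart, ppart_false]
  have hCP : ∀ k l : ℕ+, k ∈ MM C ↔ ppart P l * ppart (fun p => ¬ P p) k ∈ MM C := by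
    have key : ∀ k, k ∈ MM C ↔ ppart (fun p => ¬ P p) k ∈ MM C := by
      intro k
      refine exists_congr fun a => and_congr_right fun ha => ?_
      by_cases ha0 : a = 0
      · subst ha0; simp
      · obtain ⟨d, rfl⟩ : ∃ d : ℕ+, (d : ℕ) = a := ⟨⟨a, Nat.pos_of_ne_zero ha0⟩, rfl⟩
        have := dvd_ppart_iff (fun p => ¬ P p) d k (fun p hp => by
          rintro ⟨b, hb, hpb⟩
          exact Nat.not_coprime_of_dvd_of_dvd p.2.one_lt hpb hp (hcop b hb d ha))
        rw [PNat.dvd_iff, PNat.dvd_iff] at this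
        exact this.symm
    intro k l
    rw [key k, key (_ * _)]
    simp [ppart_mul, ppart_ppart, ppart_false]
  have hprod : ∀ M N : Set ℕ+, ZZ M s * ZZ N s =
      ∑' x : ℕ+ × ℕ+, if x.1 ∈ M ∧ x.2 ∈ N then wt s (x.1 * x.2) else 0 := by
    intro M N
    rw [ENNReal.tsum_prod']
    unfold ZZ
    simp_rw [← ENNReal.tsum_mul_right, ← ENNReal.tsum_mul_left]
    refine tsum_congr fun k => tsum_congr fun l => ?_
    by_cases hk : k ∈ M <;> by_cases hl : l ∈ N <;> simp [hk, hl, wt_mul]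
  rw [hprod, hprod, ← (swapE P).tsum_eq
    (fun x => if x.1 ∈ MM A ∧ x.2 ∈ MM C then wt s (x.1 * x.2) else 0)]
  refine tsum_congr fun x => ?_
  have e1 : (swapE P x).1 = ppart P x.1 * ppart (fun p => ¬ P p) x.2 := rfl
  have e2 : (swapE P x).2 = ppart P x.2 * ppart (fun p => ¬ P p) x.1 := rfl
  have e3 : (swapE P x).1 * (swapE P x).2 = x.1 * x.2 := by
    rw [e1, e2]
    conv_rhs => rw [← ppart_mul_compl P x.1, ← ppart_mul_compl P x.2]
    ac_rfl
  rw [e3, e1, e2, ← hAP, ← hCP]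
  simp

/-- Weighted functional used in Karamata's argument. -/
def LL (a : ℕ → ℝ) (φ : ℝ → ℝ) (ε : ℝ) : ℝ :=
  ε * ∑' k : ℕ, a k * (k : ℝ) ^ (-(1 + ε)) * φ ((k : ℝ) ^ (-ε))

lemma pow_mem_Icc (k : ℕ) (ε : ℝ) (hε : 0 < ε) : (k : ℝ) ^ (-ε) ∈ Icc (0 : ℝ) 1 := by
  refine ⟨by positivity, ?_⟩
  rcases Nat.eq_zero_or_pos k with rfl | hk
  · rw [Nat.cast_zero, Real.zero_rpow (by linarith)]; norm_num
  · exact Real.rpow_le_one_of_one_le_of_nonpos (by exact_mod_cast hk) (by linarith)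

lemma summ_base (a : ℕ → ℝ) (ha : ∀ k, 0 ≤ a k ∧ a k ≤ 1) (ε : ℝ) (hε : 0 < ε) :
    Summable (fun k : ℕ => a k * (k : ℝ) ^ (-(1 + ε))) := by
  refine Summable.of_nonneg_of_le (fun k => mul_nonneg (ha k).1 (by positivity)) (fun k => ?_)
    (Real.summable_nat_rpow.2 (by linarith : -(1 + ε) < -1))
  exact mul_le_of_le_one_left (by positivity) (ha k).2

lemma summ_LL (a : ℕ → ℝ) (ha : ∀ k, 0 ≤ a k ∧ a k ≤ 1) (φ : ℝ → ℝ) (B : ℝ)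
    (hφ : ∀ x ∈ Icc (0 : ℝ) 1, |φ x| ≤ B) (ε : ℝ) (hε : 0 < ε) :
    Summable (fun k : ℕ => a k * (k : ℝ) ^ (-(1 + ε)) * φ ((k : ℝ) ^ (-ε))) := by
  refine Summable.of_norm_bounded ((summ_base a ha ε hε).mul_right B) (fun k => ?_)
  have h0 : 0 ≤ a k * (k : ℝ) ^ (-(1 + ε)) := mul_nonneg (ha k).1 (by positivity)
  rw [norm_mul, Real.norm_of_nonneg h0]
  exact mul_le_mul_of_nonneg_left (hφ _ (pow_mem_Icc k ε hε)) h0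

lemma bdd_cont (φ : ℝ → ℝ) (hφ : ContinuousOn φ (Icc 0 1)) :
    ∃ B, ∀ x ∈ Icc (0 : ℝ) 1, |φ x| ≤ B :=
  isCompact_Icc.exists_bound_of_continuousOn hφ

lemma LL_poly (a : ℕ → ℝ) (ha : ∀ k, 0 ≤ a k ∧ a k ≤ 1) (d : ℝ)
    (hd : Tendsto (fun ε : ℝ => ε * ∑' k : ℕ, a k * (k : ℝ) ^ (-(1 + ε))) (𝓝[>] 0) (𝓝 d))
    (p : Polynomial ℝ) :
    Tendsto (LL a (fun x => p.eval x)) (𝓝[>] 0) (𝓝 (d * ∫ x in (0 : ℝ)..1, p.eval x)) := by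
  induction p using Polynomial.induction_on' with
  | add p q hp hq =>
    have h1 := hp.add hq
    have e : (∫ x in (0 : ℝ)..1, (p + q).eval x) =
        (∫ x in (0 : ℝ)..1, p.eval x) + ∫ x in (0 : ℝ)..1, q.eval x := by
      simp only [Polynomial.eval_add]
      exact intervalIntegral.integral_add (p.continuous.intervalIntegrable _ _)
        (q.continuous.intervalIntegrable _ _)
    rw [e, mul_add]
    refine h1.congr' ?_
    filter_upwards [self_mem_nhdsWithin] with ε hε
    obtain ⟨B, hB⟩ := bdd_cont _ p.continuous.continuousOn
    obtain ⟨B', hB'⟩ := bdd_cont _ q.continuous.continuousOn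
    unfold LL
    rw [← mul_add, ← (summ_LL a ha _ B hB ε hε).tsum_add (summ_LL a ha _ B' hB' ε hε)]
    simp only [Polynomial.eval_add, mul_add]
  | monomial m c =>
    have e : (∫ x in (0 : ℝ)..1, (Polynomial.monomial m c).eval x) = c / (m + 1) := by
      simp [Polynomial.eval_monomial, div_eq_mul_inv]
    rw [e]
    have hm : (0 : ℝ) < m + 1 := by positivity
    have ht : Tendsto (fun ε : ℝ => (m + 1) * ε) (𝓝[>] 0) (𝓝[>] 0) := by
      refine tendsto_nhdsWithin_iff.2 ⟨?_, ?_⟩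
      · have : Tendsto (fun ε : ℝ => (m + 1) * ε) (𝓝 0) (𝓝 ((m + 1) * 0)) :=
          (continuous_const.mul continuous_id).tendsto 0
        rw [mul_zero] at this
        exact this.mono_left nhdsWithin_le_nhds
      · filter_upwards [self_mem_nhdsWithin] with ε hε
        exact mul_pos hm hε
    have h2 := (hd.comp ht).mul_const (c / (m + 1))
    refine h2.congr' ?_
    filter_upwards [self_mem_nhdsWithin] with ε hε
    have hε' : (0 : ℝ) < ε := hε
    have key : ∀ k : ℕ, a k * (k : ℝ) ^ (-(1 + ε)) *
        (Polynomial.monomial m c).eval ((k : ℝ) ^ (-ε)) =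
        (a k * (k : ℝ) ^ (-(1 + (m + 1) * ε))) * c := by
      intro k
      rcases Nat.eq_zero_or_pos k with rfl | hk
      · have : (0 : ℝ) < 1 + (m + 1) * ε := by positivity
        rw [Nat.cast_zero, Real.zero_rpow (x := -(1 + (m + 1) * ε)) (by linarith),
          Real.zero_rpow (x := -(1 + ε)) (by linarith)]
        simp
      · have hk' : (0 : ℝ) < k := by exact_mod_cast hk
        have : (k : ℝ) ^ (-(1 + (m + 1) * ε)) =
            (k : ℝ) ^ (-(1 + ε)) * ((k : ℝ) ^ (-ε)) ^ m := by
          rw [← Real.rpow_natCast, ← Real.rpow_mul hk'.le, ← Real.rpow_add hk']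
          congr 1; ring
        rw [Polynomial.eval_monomial, this]; ring
    unfold LL
    simp_rw [key]
    rw [tsum_mul_right]
    simp only [Function.comp]
    field_simp

lemma LL_cont (a : ℕ → ℝ) (ha : ∀ k, 0 ≤ a k ∧ a k ≤ 1) (d : ℝ)
    (hd : Tendsto (fun ε : ℝ => ε * ∑' k : ℕ, a k * (k : ℝ) ^ (-(1 + ε))) (𝓝[>] 0) (𝓝 d))
    (φ : ℝ → ℝ) (hφ : Continuous φ) :
    Tendsto (LL a φ) (𝓝[>] 0) (𝓝 (d * ∫ x in (0 : ℝ)..1, φ x)) := by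
  rw [Metric.tendsto_nhds]
  intro η hη
  set δ : ℝ := η / (3 * (|d| + 1)) with hδ
  have hδ0 : 0 < δ := by positivity
  obtain ⟨p, hp⟩ := exists_polynomial_near_of_continuousOn 0 1 φ hφ.continuousOn δ hδ0
  have hδd : δ * (|d| + 1) = η / 3 := by rw [hδ]; field_simp
  have h1 := Metric.tendsto_nhds.1 (LL_poly a ha d hd p) (η / 3) (by positivity)
  have h2 := hd.eventually_lt_const (show d < |d| + 1 by linarith [le_abs_self d])
  filter_upwards [h1, h2, self_mem_nhdsWithin] with ε h1 h2 hε
  have hε' : (0 : ℝ) < ε := hε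
  obtain ⟨B, hB⟩ := bdd_cont _ p.continuous.continuousOn
  obtain ⟨B', hB'⟩ := bdd_cont _ hφ.continuousOn
  have s1 := summ_LL a ha _ B hB ε hε
  have s2 := summ_LL a ha _ B' hB' ε hε
  have s0 := summ_base a ha ε hε
  have A1 : |LL a φ ε - LL a (fun x => p.eval x) ε| ≤ η / 3 := by
    unfold LL
    rw [← mul_sub, ← s2.tsum_sub s1, abs_mul, abs_of_pos hε']
    have : |∑' k : ℕ, (a k * (k : ℝ) ^ (-(1 + ε)) * φ ((k : ℝ) ^ (-ε)) -
        a k * (k : ℝ) ^ (-(1 + ε)) * p.eval ((k : ℝ) ^ (-ε)))| ≤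
        ∑' k : ℕ, a k * (k : ℝ) ^ (-(1 + ε)) * δ := by
      rw [← Real.norm_eq_abs]
      refine tsum_of_norm_bounded (s0.mul_right δ).hasSum fun k => ?_
      have h0 : 0 ≤ a k * (k : ℝ) ^ (-(1 + ε)) := mul_nonneg (ha k).1 (by positivity)
      rw [← mul_sub, norm_mul, Real.norm_of_nonneg h0]
      refine mul_le_mul_of_nonneg_left ?_ h0
      rw [Real.norm_eq_abs, abs_sub_comm]
      exact (hp _ (pow_mem_Icc k ε hε)).le
    rw [tsum_mul_right] at this
    calc _ ≤ ε * ((∑' k : ℕ, a k * (k : ℝ) ^ (-(1 + ε))) * δ) := by gcongr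
      _ = (ε * ∑' k : ℕ, a k * (k : ℝ) ^ (-(1 + ε))) * δ := by ring
      _ ≤ (|d| + 1) * δ := by gcongr
      _ = η / 3 := by rw [← hδd]; ring
  have A2 : |d * (∫ x in (0 : ℝ)..1, p.eval x) - d * ∫ x in (0 : ℝ)..1, φ x| < η / 3 := by
    rw [← mul_sub, ← intervalIntegral.integral_sub (p.continuous.intervalIntegrable _ _)
      (hφ.intervalIntegrable _ _), abs_mul]
    have : ‖∫ x in (0 : ℝ)..1, (p.eval x - φ x)‖ ≤ δ * |(1 : ℝ) - 0| := by
      refine intervalIntegral.norm_integral_le_of_norm_le_const fun x hx => ?_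
      rw [uIoc_of_le zero_le_one] at hx
      exact (hp x ⟨hx.1.le, hx.2⟩).le
    rw [sub_zero, abs_one, mul_one, Real.norm_eq_abs] at this
    calc _ ≤ |d| * δ := by gcongr
      _ < η / 3 := by rw [← hδd]; nlinarith
  rw [Real.dist_eq] at h1 ⊢
  rw [abs_le] at A1
  rw [abs_lt] at *
  constructor <;> linarith [h1.1, h1.2, A1.1, A1.2, A2.1, A2.2]

/-- Continuous cut-off functions. -/
def cut (c : ℝ) (n : ℕ) (x : ℝ) : ℝ :=
  (max x (Real.exp (-1)))⁻¹ * min 1 (max 0 (c + n * (x - Real.exp (-1))))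

lemma cut_continuous (c : ℝ) (n : ℕ) : Continuous (cut c n) := by
  unfold cut
  refine Continuous.mul (Continuous.inv₀ (by fun_prop) fun x => ?_) (by fun_prop)
  exact (lt_max_of_lt_right (Real.exp_pos _)).ne'

lemma cut_integral (c : ℝ) (hc : 0 ≤ c) :
    Tendsto (fun n => ∫ x in (0 : ℝ)..1, cut c n x) atTop (𝓝 1) := by
  have he : Real.exp (-1) < 1 := by
    rw [← Real.exp_zero]; exact Real.exp_lt_exp.2 (by norm_num)
  have he0 := Real.exp_pos (-1)
  have e : ∫ x in (0 : ℝ)..1, (Ioi (Real.exp (-1))).indicator (fun x => x⁻¹) x = 1 := by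
    rw [intervalIntegral.integral_of_le zero_le_one, setIntegral_indicator measurableSet_Ioi]
    have : Ioc (0 : ℝ) 1 ∩ Ioi (Real.exp (-1)) = Ioc (Real.exp (-1)) 1 := by
      ext x
      simp only [mem_inter_iff, mem_Ioc, mem_Ioi]
      constructor
      · rintro ⟨⟨_, h⟩, h'⟩; exact ⟨h', h⟩
      · rintro ⟨h', h⟩; exact ⟨⟨by linarith, h⟩, h'⟩
    rw [this, ← intervalIntegral.integral_of_le he.le,
      integral_inv_of_pos he0 one_pos, one_div, ← Real.exp_neg, Real.log_exp]
    norm_num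
  suffices h : Tendsto (fun n => ∫ x in (0 : ℝ)..1, cut c n x) atTop
      (𝓝 (∫ x in (0 : ℝ)..1, (Ioi (Real.exp (-1))).indicator (fun x => x⁻¹) x)) by rwa [e] at h
  refine intervalIntegral.tendsto_integral_filter_of_dominated_convergence
    (fun _ => (Real.exp (-1))⁻¹) ?_ ?_ ?_ ?_
  · exact Eventually.of_forall fun n => (cut_continuous c n).aestronglyMeasurable
  · refine Eventually.of_forall fun n => Eventually.of_forall fun x _ => ?_
    unfold cut
    have h1 : 0 ≤ min 1 (max 0 (c + n * (x - Real.exp (-1)))) := by positivity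
    have h2 : (max x (Real.exp (-1)))⁻¹ ≤ (Real.exp (-1))⁻¹ :=
      inv_anti₀ he0 (le_max_right _ _)
    have h3 : 0 ≤ (max x (Real.exp (-1)))⁻¹ :=
      inv_nonneg.2 (he0.le.trans (le_max_right _ _))
    rw [Real.norm_of_nonneg (mul_nonneg h3 h1)]
    exact (mul_le_of_le_one_right h3 (min_le_left _ _)).trans h2
  · exact intervalIntegrable_const
  · have : ∀ᵐ x : ℝ, x ≠ Real.exp (-1) := by
      simp [ae_iff]
    filter_upwards [this] with x hx _
    refine tendsto_const_nhds.congr' ?_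
    rcases lt_or_gt_of_ne hx with h | h
    · obtain ⟨N, hN⟩ := exists_nat_gt (c / (Real.exp (-1) - x))
      filter_upwards [eventually_ge_atTop N] with n hn
      have hn' : (N : ℝ) ≤ n := by exact_mod_cast hn
      have h4 : c < n * (Real.exp (-1) - x) := by
        rw [← div_lt_iff₀ (by linarith)]; linarith
      have h5 : c + n * (x - Real.exp (-1)) ≤ 0 := by nlinarith
      rw [indicator_of_notMem (by simp only [mem_Ioi]; linarith), cut, max_eq_left h5]
      simp
    · obtain ⟨N, hN⟩ := exists_nat_gt (1 / (x - Real.exp (-1)))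
      filter_upwards [eventually_ge_atTop N] with n hn
      have hn' : (N : ℝ) ≤ n := by exact_mod_cast hn
      have h4 : 1 < n * (x - Real.exp (-1)) := by
        rw [← div_lt_iff₀ (by linarith)]; linarith
      rw [indicator_of_mem (by exact h), cut, max_eq_left h.le,
        min_eq_left (le_max_of_le_right (by linarith)), mul_one]

/-- The sharp cut-off. -/
def sharp (x : ℝ) : ℝ := if Real.exp (-1) ≤ x then x⁻¹ else 0

lemma cut_zero_le (n : ℕ) (x : ℝ) : cut 0 n x ≤ sharp x := by
  unfold cut sharp
  have he0 := Real.exp_pos (-1)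
  split_ifs with h
  · rw [max_eq_left h]
    exact mul_le_of_le_one_right (inv_nonneg.2 (he0.le.trans h)) (min_le_left _ _)
  · push Not at h
    have : (0 : ℝ) + n * (x - Real.exp (-1)) ≤ 0 := by
      have : (0 : ℝ) ≤ n := by positivity
      nlinarith
    rw [max_eq_left this]; simp

lemma le_cut_one (n : ℕ) (x : ℝ) : sharp x ≤ cut 1 n x := by
  unfold cut sharp
  have he0 := Real.exp_pos (-1)
  split_ifs with h
  · have : (0 : ℝ) ≤ n * (x - Real.exp (-1)) := mul_nonneg (by positivity) (by linarith)
    rw [max_eq_left h, min_eq_left (le_max_of_le_right (by linarith)), mul_one]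
  · have h3 : 0 ≤ (max x (Real.exp (-1)))⁻¹ := inv_nonneg.2 (he0.le.trans (le_max_right _ _))
    exact mul_nonneg h3 (by positivity)

lemma sharp_bdd (x : ℝ) : |sharp x| ≤ (Real.exp (-1))⁻¹ := by
  have he0 := Real.exp_pos (-1)
  unfold sharp
  split_ifs with h
  · rw [abs_of_nonneg (inv_nonneg.2 (he0.le.trans h))]
    exact inv_anti₀ he0 h
  · simpa using he0.le

lemma LL_sharp (a : ℕ → ℝ) (n : ℕ) (hn : 2 ≤ n) :
    LL a sharp (Real.log n)⁻¹ = (Real.log n)⁻¹ * ∑ k ∈ Finset.Icc 1 n, a k * (k : ℝ)⁻¹ := by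
  have hlog : 0 < Real.log n := Real.log_pos (by exact_mod_cast hn)
  unfold LL
  congr 1
  have hpow : ∀ k : ℕ, 0 < k →
      ((k : ℝ) ^ (-(Real.log n)⁻¹) = Real.exp (-(Real.log k / Real.log n))) := by
    intro k hk
    rw [Real.rpow_def_of_pos (by exact_mod_cast hk)]
    congr 1
    ring
  have hiff : ∀ k : ℕ, 0 < k → (Real.exp (-1) ≤ (k : ℝ) ^ (-(Real.log n)⁻¹) ↔ k ≤ n) := by
    intro k hk
    rw [hpow k hk, Real.exp_le_exp, neg_le_neg_iff, div_le_one hlog,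
      Real.log_le_log_iff (by exact_mod_cast hk) (by exact_mod_cast (by omega : 0 < n))]
    exact_mod_cast Iff.rfl
  rw [tsum_eq_sum (s := Finset.Icc 1 n)]
  · refine Finset.sum_congr rfl fun k hk => ?_
    rw [Finset.mem_Icc] at hk
    have hk0 : (0 : ℝ) < k := by exact_mod_cast hk.1
    rw [sharp, if_pos ((hiff k hk.1).2 hk.2), ← Real.rpow_neg hk0.le, mul_assoc,
      ← Real.rpow_add hk0, ← Real.rpow_neg_one (k : ℝ)]
    congr 2
    ring
  · intro k hk
    rcases Nat.eq_zero_or_pos k with rfl | hk0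
    · have : 0 < (Real.log n)⁻¹ := inv_pos.2 hlog
      rw [Nat.cast_zero, Real.zero_rpow (by linarith)]; simp
    · rw [sharp, if_neg, mul_zero]
      rw [hiff k hk0]
      simp only [Finset.mem_Icc, not_and] at hk
      exact hk hk0

lemma LL_mono (a : ℕ → ℝ) (ha : ∀ k, 0 ≤ a k ∧ a k ≤ 1) (φ ψ : ℝ → ℝ) (B B' : ℝ)
    (hφ : ∀ x ∈ Icc (0 : ℝ) 1, |φ x| ≤ B) (hψ : ∀ x ∈ Icc (0 : ℝ) 1, |ψ x| ≤ B')
    (h : ∀ x, φ x ≤ ψ x) (ε : ℝ) (hε : 0 < ε) : LL a φ ε ≤ LL a ψ ε := by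
  refine mul_le_mul_of_nonneg_left ?_ hε.le
  refine (summ_LL a ha φ B hφ ε hε).tsum_le_tsum (fun k => ?_) (summ_LL a ha ψ B' hψ ε hε)
  exact mul_le_mul_of_nonneg_left (h _) (mul_nonneg (ha k).1 (by positivity))

lemma karamata (a : ℕ → ℝ) (ha : ∀ k, 0 ≤ a k ∧ a k ≤ 1) (d : ℝ)
    (hd : Tendsto (fun ε : ℝ => ε * ∑' k : ℕ, a k * (k : ℝ) ^ (-(1 + ε))) (𝓝[>] 0) (𝓝 d)) :
    Tendsto (fun n : ℕ => (Real.log n)⁻¹ * ∑ k ∈ Finset.Icc 1 n, a k * (k : ℝ)⁻¹) atTop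
      (𝓝 d) := by
  have hε : Tendsto (fun n : ℕ => (Real.log n)⁻¹) atTop (𝓝[>] 0) := by
    have h1 : Tendsto (fun n : ℕ => Real.log n) atTop atTop :=
      Real.tendsto_log_atTop.comp tendsto_natCast_atTop_atTop
    exact tendsto_inv_atTop_nhdsGT_zero.comp h1
  have hS : ∀ x ∈ Icc (0 : ℝ) 1, |sharp x| ≤ (Real.exp (-1))⁻¹ := fun x _ => sharp_bdd x
  have hlim : ∀ c : ℝ, 0 ≤ c →
      Tendsto (fun m : ℕ => d * ∫ x in (0 : ℝ)..1, cut c m x) atTop (𝓝 d) := by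
    intro c hc
    simpa using (cut_integral c hc).const_mul d
  refine tendsto_order.2 ⟨fun b hb => ?_, fun b hb => ?_⟩
  · obtain ⟨m, hm⟩ := ((hlim 0 le_rfl).eventually_const_lt hb).exists
    have h := ((LL_cont a ha d hd _ (cut_continuous 0 m)).comp hε).eventually_const_lt hm
    filter_upwards [h, eventually_ge_atTop 2, hε self_mem_nhdsWithin] with n h hn hn'
    obtain ⟨B, hB⟩ := bdd_cont _ (cut_continuous 0 m).continuousOn
    rw [← LL_sharp a n hn]
    exact lt_of_lt_of_le h (LL_mono a ha _ _ B _ hB hS (cut_zero_le m) _ hn')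
  · obtain ⟨m, hm⟩ := ((hlim 1 zero_le_one).eventually_lt_const hb).exists
    have h := ((LL_cont a ha d hd _ (cut_continuous 1 m)).comp hε).eventually_lt_const hm
    filter_upwards [h, eventually_ge_atTop 2, hε self_mem_nhdsWithin] with n h hn hn'
    obtain ⟨B, hB⟩ := bdd_cont _ (cut_continuous 1 m).continuousOn
    rw [← LL_sharp a n hn]
    exact lt_of_le_of_lt (LL_mono a ha _ _ _ B hS hB (le_cut_one m) _ hn') h

lemma ZZ_real (S : Set ℕ+) (M : Set ℤ) (h : ∀ k : ℕ+, k ∈ S ↔ ((k : ℕ) : ℤ) ∈ M) (s : ℝ)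
    (hs : 1 < s) :
    ZZ S s = ENNReal.ofReal (∑' k : ℕ, (if (k : ℤ) ∈ M then (1 : ℝ) else 0) * (k : ℝ) ^ (-s)) := by
  have hsum : Summable (fun k : ℕ => (if (k : ℤ) ∈ M then (1 : ℝ) else 0) * (k : ℝ) ^ (-s)) := by
    have := summ_base (fun k : ℕ => if (k : ℤ) ∈ M then (1 : ℝ) else 0)
      (fun k => by split_ifs <;> simp) (s - 1) (by linarith)
    simpa using this
  have hz : (if ((0 : ℕ) : ℤ) ∈ M then (1 : ℝ) else 0) * ((0 : ℕ) : ℝ) ^ (-s) = 0 := by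
    rw [Nat.cast_zero (R := ℝ), Real.zero_rpow (by linarith), mul_zero]
  rw [← tsum_zero_pnat_eq_tsum_nat hsum, hz, zero_add, ENNReal.ofReal_tsum_of_nonneg]
  · unfold ZZ wt
    refine tsum_congr fun k => ?_
    by_cases hk : k ∈ S
    · rw [if_pos hk, if_pos ((h k).1 hk), one_mul]
    · rw [if_neg hk, if_neg (fun h' => hk ((h k).2 h'))]; simp
  · intro k
    split_ifs <;> positivity
  · exact summable_pnat_iff_summable_nat.2 hsum

lemma ZZ_univ_pos (s : ℝ) : ZZ univ s ≠ 0 := by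
  intro h
  have := (ENNReal.tsum_eq_zero.1 h) 1
  simp [wt] at this

lemma ZZ_ne_top (S : Set ℕ+) (s : ℝ) (hs : 1 < s) : ZZ S s ≠ ⊤ := by
  rw [ZZ_real S ((fun k : ℕ+ => ((k : ℕ) : ℤ)) '' S) (fun k => ?_) s hs]
  · exact ENNReal.ofReal_ne_top
  · refine ⟨fun hk => ⟨k, hk, rfl⟩, ?_⟩
    rintro ⟨l, hl, h⟩
    have : l = k := PNat.eq (Int.ofNat.inj h)
    exact this ▸ hl

lemma ZZ_le_univ (S : Set ℕ+) (s : ℝ) : ZZ S s ≤ ZZ univ s := by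
  refine ENNReal.tsum_le_tsum fun k => ?_
  by_cases h : k ∈ S <;> simp [h]

lemma ratio_tendsto (S : Set ℕ+) (hS : ∀ k ∈ S, ∀ l, k * l ∈ S) :
    ∃ d : ℝ, Tendsto (fun s => (ZZ S s).toReal / (ZZ univ s).toReal) (𝓝[>] 1) (𝓝 d) := by
  have hpos : ∀ s, 1 < s → 0 < (ZZ univ s).toReal := fun s hs =>
    ENNReal.toReal_pos (ZZ_univ_pos s) (ZZ_ne_top _ s hs)
  refine ⟨_, AntitoneOn.tendsto_nhdsGT ?_ ⟨1, ?_⟩⟩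
  · intro s hs t ht hst
    rcases hst.eq_or_lt with rfl | hst
    · exact le_rfl
    have := ENNReal.toReal_mono (ENNReal.mul_ne_top (ZZ_ne_top S s hs) (ZZ_ne_top univ t ht))
      (ZZ_mono S hS s t hst)
    rw [ENNReal.toReal_mul, ENNReal.toReal_mul] at this
    exact (div_le_div_iff₀ (hpos t ht) (hpos s hs)).2 this
  · rintro _ ⟨s, hs, rfl⟩
    exact div_le_one_of_le₀ (ENNReal.toReal_mono (ZZ_ne_top _ s hs) (ZZ_le_univ S s))
      ENNReal.toReal_nonneg

lemma hasLogDensity_of_ratio (S : Set ℕ+) (M : Set ℤ)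
    (h : ∀ k : ℕ+, k ∈ S ↔ ((k : ℕ) : ℤ) ∈ M) (d : ℝ)
    (hd : Tendsto (fun s => (ZZ S s).toReal / (ZZ univ s).toReal) (𝓝[>] 1) (𝓝 d)) :
    HasLogDensity M d := by
  have hz := tendsto_sub_mul_tsum_nat_rpow
  have h1 : Tendsto (fun s : ℝ => (s - 1) *
      ∑' k : ℕ, (if (k : ℤ) ∈ M then (1 : ℝ) else 0) * (k : ℝ) ^ (-s)) (𝓝[>] 1) (𝓝 d) := by
    have h2 := hz.mul hd
    rw [one_mul] at h2
    refine h2.congr' ?_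
    filter_upwards [self_mem_nhdsWithin] with s hs
    have hs' : (1 : ℝ) < s := hs
    have hu : ∑' n : ℕ, 1 / (n : ℝ) ^ s = (ZZ univ s).toReal := by
      rw [ZZ_real univ univ (by simp) s hs, ENNReal.toReal_ofReal (tsum_nonneg fun k => ?_)]
      · refine tsum_congr fun k => ?_
        rw [Real.rpow_neg (by positivity)]; simp
      · split_ifs <;> positivity
    have hS : (∑' k : ℕ, (if (k : ℤ) ∈ M then (1 : ℝ) else 0) * (k : ℝ) ^ (-s))
        = (ZZ S s).toReal := by
      rw [ZZ_real S M h s hs, ENNReal.toReal_ofReal (tsum_nonneg fun k => ?_)]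
      split_ifs <;> positivity
    have hpos : 0 < (ZZ univ s).toReal :=
      ENNReal.toReal_pos (ZZ_univ_pos s) (ZZ_ne_top _ s hs)
    rw [hu, hS]
    field_simp
  have ht : Tendsto (fun ε : ℝ => 1 + ε) (𝓝[>] 0) (𝓝[>] 1) := by
    refine tendsto_nhdsWithin_iff.2 ⟨?_, ?_⟩
    · have : Tendsto (fun ε : ℝ => 1 + ε) (𝓝 0) (𝓝 (1 + 0)) :=
        (continuous_const.add continuous_id).tendsto 0
      rw [add_zero] at this
      exact this.mono_left nhdsWithin_le_nhds
    · filter_upwards [self_mem_nhdsWithin] with ε hε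
      have : (0 : ℝ) < ε := hε
      simpa using this
  have h3 := karamata (fun k : ℕ => if (k : ℤ) ∈ M then (1 : ℝ) else 0)
    (fun k => by split_ifs <;> simp) d (by simpa [Function.comp_def] using h1.comp ht)
  unfold HasLogDensity
  refine h3.congr fun n => ?_
  unfold logWeight
  congr 1
  refine Finset.sum_congr rfl fun k _ => ?_
  by_cases hk : (k : ℤ) ∈ M <;> simp [hk]

/-- If `A` and `C` are coprime to each other, then the logarithmic densities of
`M_A`, `M_C` and `M_A ∩ M_C` all exist and `δ(M_A ∩ M_C) = δ(M_A)·δ(M_C)`. -/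
theorem logDensity_inter_coprime (A C : Set ℕ) (hA0 : 0 ∉ A) (hC0 : 0 ∉ C)
    (hcop : ∀ a ∈ A, ∀ c ∈ C, Nat.Coprime a c) :
    ∃ dA dC dAC : ℝ, HasLogDensity (multiplesZ A) dA ∧ HasLogDensity (multiplesZ C) dC ∧
      HasLogDensity (multiplesZ A ∩ multiplesZ C) dAC ∧ dAC = dA * dC := by
  have hM : ∀ (B : Set ℕ) (k : ℕ+), k ∈ MM B ↔ ((k : ℕ) : ℤ) ∈ multiplesZ B := by
    intro B k
    simp only [MM, multiplesZ, mem_ofPred_eq, Int.natCast_dvd_natCast]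
  have hup : ∀ B : Set ℕ, ∀ k ∈ MM B, ∀ l, k * l ∈ MM B := by
    rintro B k ⟨b, hb, h⟩ l
    exact ⟨b, hb, by rw [PNat.mul_coe]; exact h.mul_right _⟩
  obtain ⟨dA, hA⟩ := ratio_tendsto (MM A) (hup A)
  obtain ⟨dC, hC⟩ := ratio_tendsto (MM C) (hup C)
  refine ⟨dA, dC, dA * dC, hasLogDensity_of_ratio _ _ (hM A) _ hA,
    hasLogDensity_of_ratio _ _ (hM C) _ hC,
    hasLogDensity_of_ratio (MM A ∩ MM C) (multiplesZ A ∩ multiplesZ C)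
      (fun k => and_congr (hM A k) (hM C k)) _ ?_, rfl⟩
  refine (hA.mul hC).congr' ?_
  filter_upwards [self_mem_nhdsWithin] with s hs
  have hpos : 0 < (ZZ univ s).toReal :=
    ENNReal.toReal_pos (ZZ_univ_pos s) (ZZ_ne_top _ s hs)
  have := congrArg ENNReal.toReal (ZZ_inter A C hcop s)
  rw [ENNReal.toReal_mul, ENNReal.toReal_mul] at this
  rw [div_mul_div_comm, ← this]
  field_simp
end
end
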